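/- arXiv:1012.0023 — 5 statements merged into one kernel-verified Lean document; each statement's English description precedes it below -/
import Mathlib

section
/- Every k-rated linear grammar, where k = g/h with g, h ∈ ℕ coprime and h ≠ 0, has an equivalent grammar (generating the same language up to the empty word) in which every production of the form A → v B w satisfies |w| = g and |v| = h, and every terminating production of the form A → u with u a word of terminals satisfies |u| < g + h. -/
/-- The `i`-fold repetition `v^i` of a word `v`. -/
def wordPow {T : Type} (v : List T) : ℕ → List T
  | 0 => []
  | n + 1 => v ++ wordPow v n

/-- A production of a linear grammar: either `A → u` (with `u` a terminal word)
or `A → u B w` (with `u, w` terminal words and `B` a nonterminal). -/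
structure LinearRule (T N : Type) where
  input : N
  output : List T ⊕ (List T × N × List T)

/-- `LinDerives rs A p` : from nonterminal `A`, the linear productions in `rs`
derive the terminal word `p`. -/
inductive LinDerives {T N : Type} (rs : List (LinearRule T N)) : N → List T → Prop
  | terminal {A : N} {u : List T} (hr : (⟨A, Sum.inl u⟩ : LinearRule T N) ∈ rs) :
      LinDerives rs A u
  | step {A B : N} {u w p : List T}
      (hr : (⟨A, Sum.inr (u, B, w)⟩ : LinearRule T N) ∈ rs)
      (hp : LinDerives rs B p) :
      LinDerives rs A (u ++ p ++ w)

/-- A linear grammar: a type of nonterminals, a start symbol, and a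
finite list of linear productions. -/
structure LinearGrammar (T : Type) where
  NT : Type
  start : NT
  rules : List (LinearRule T NT)

/-- The language generated by a linear grammar. -/
def LinearGrammar.language {T : Type} (G : LinearGrammar T) : Set (List T) :=
  {p | LinDerives G.rules G.start p}

/-- A linear grammar is `(g/h)`-rated linear (`k = g/h`) if every production
`A → u B w` satisfies `h * |w| = g * |u|`. -/
def LinearGrammar.IsRated {T : Type} (g h : ℕ) (G : LinearGrammar T) : Prop :=
  ∀ r ∈ G.rules, ∀ u w, ∀ B : G.NT, r.output = Sum.inr (u, B, w) →
    h * w.length = g * u.length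

/-- A grammar generates exactly the language `L`, up to the empty word. -/
def LinearGrammar.GeneratesModEmpty {T : Type} (G : LinearGrammar T) (L : Set (List T)) :
    Prop :=
  ∀ p : List T, p ≠ [] → (p ∈ L ↔ p ∈ G.language)

/-- A language is linear if some linear grammar generates it, up to the empty word. -/
def IsLinearLang {T : Type} (L : Set (List T)) : Prop :=
  ∃ G : LinearGrammar T, G.GeneratesModEmpty L

/-- A language is `(g/h)`-rated linear if some `(g/h)`-rated linear grammar
generates it, up to the empty word. -/
def IsRatedLinearLang {T : Type} (g h : ℕ) (L : Set (List T)) : Prop :=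
  ∃ G : LinearGrammar T, G.IsRated g h ∧ G.GeneratesModEmpty L

/-- A `k`-linear grammar: a linear grammar together with the extra production
`S → S₁S₂⋯S_k` from a start symbol `S`, where none of the `Sᵢ` (the `heads`)
occurs on the right-hand side of any other production and `S` occurs in no other
production at all (the latter is automatic here, since the start symbol is kept
as a fresh symbol outside the type `NT` of the remaining nonterminals). -/
structure KLinearGrammar (T : Type) (k : ℕ) where
  NT : Type
  heads : Fin k → NT
  rules : List (LinearRule T NT)
  heads_not_on_rhs : ∀ r ∈ rules, ∀ u w, ∀ B : NT, r.output = Sum.inr (u, B, w) →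
    ∀ i : Fin k, B ≠ heads i

/-- The language generated by a `k`-linear grammar: as the start symbol occurs
only in the production `S → S₁S₂⋯S_k`, it consists of the concatenations
`p₁p₂⋯p_k` where each `pᵢ` is derived from `Sᵢ` by the linear productions. -/
def KLinearGrammar.language {T : Type} {k : ℕ} (G : KLinearGrammar T k) : Set (List T) :=
  {p | ∃ ps : Fin k → List T, p = (List.ofFn ps).flatten ∧
    ∀ i : Fin k, LinDerives G.rules (G.heads i) (ps i)}

/-- A language is `k`-linear if some `k`-linear grammar generates it, up to the
empty word. -/
def IsKLinearLang {T : Type} (k : ℕ) (L : Set (List T)) : Prop :=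
  ∃ G : KLinearGrammar T k, ∀ p : List T, p ≠ [] → (p ∈ L ↔ p ∈ G.language)

/-- A language is metalinear if it is `k`-linear for some positive integer `k`. -/
def IsMetalinearLang {T : Type} (L : Set (List T)) : Prop :=
  ∃ k : ℕ, 0 < k ∧ IsKLinearLang k L

/-!
The nonterminals of the new grammar are languages.  Over a finite family `F` of languages and a
finite alphabet, take all productions of normal shape that are *sound*: `L → u` with `u ∈ L`, and
`L → v L' w` with `v L' w ⊆ L`.  A language then derives only its own words, and it derives all of
them as soon as every long word `p ∈ L` can be *peeled*, i.e. `p ∈ v L' w ⊆ L` with `|v| = h`,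
`|w| = g` and `L' ∈ F`.

For a rated grammar let `F` consist of the singletons `{q}` and of the languages `a L(B) b` with
`h |b| = g |a|`, the words `q`, `a`, `b` being no longer than the longest right-hand side.  To peel
`a q b` with `q ∈ L(B)`, follow the derivation of `q`, adding the outer words `u`, `w` of each rule
to `a` and `b`.  The rate keeps `|a| ≤ h` and `|b| ≤ g` until both `|a| ≥ h` and `|b| ≥ g`, and what
then remains of `u` and `w` is again short and of the same rate; if the derivation ends earlier, a
factor of the word of its terminating rule remains.
-/

theorem le_and_le_or_ge_and_ge_of_mul_eq_mul {g h i j : ℕ} (hij : h * j = g * i) :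
    (h ≤ i ∧ g ≤ j) ∨ (i ≤ h ∧ j ≤ g) := by
  rcases Nat.eq_zero_or_pos h with rfl | hpos
  · rcases Nat.eq_zero_or_pos g with rfl | gpos
    · exact .inl ⟨Nat.zero_le _, Nat.zero_le _⟩
    · have hi : i = 0 := by simpa [gpos.ne'] using hij.symm
      omega
  · rcases le_total h i with hi | hi
    · exact .inl ⟨hi, Nat.le_of_mul_le_mul_left (by rw [hij, mul_comm]; gcongr) hpos⟩
    · exact .inr ⟨hi, Nat.le_of_mul_le_mul_left (by rw [hij, mul_comm h]; gcongr) hpos⟩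

theorem exists_append_left_length_eq {T : Type*} {a u : List T} {k : ℕ} (ha : a.length ≤ k)
    (hk : k ≤ (a ++ u).length) : ∃ s u', u = s ++ u' ∧ (a ++ s).length = k := by
  rw [List.length_append] at hk
  refine ⟨u.take (k - a.length), u.drop (k - a.length), by simp, ?_⟩
  rw [List.length_append, List.length_take]
  omega

theorem exists_append_right_length_eq {T : Type*} {w b : List T} {k : ℕ} (hb : b.length ≤ k)
    (hk : k ≤ (w ++ b).length) : ∃ w' t, w = w' ++ t ∧ (t ++ b).length = k := by
  rw [List.length_append] at hk
  refine ⟨w.take (w.length + b.length - k), w.drop (w.length + b.length - k), by simp, ?_⟩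
  rw [List.length_append, List.length_drop]
  omega

/-- The words of length at most `n` over the alphabet `S`. -/
def shortWords {T : Type*} (S : Set T) (n : ℕ) : Set (List T) :=
  {p | p.length ≤ n ∧ ∀ x ∈ p, x ∈ S}

section shortWords

variable {T : Type*} {S : Set T} {n : ℕ}

theorem shortWords_finite (hS : S.Finite) (n : ℕ) : (shortWords S n).Finite := by
  have : Finite S := hS
  refine ((List.finite_length_le S n).image (List.map Subtype.val)).subset ?_
  rintro p ⟨hlen, hletters⟩
  lift p to List S using hletters
  exact ⟨p, by simpa using hlen, rfl⟩

theorem mem_shortWords_of_sublist {p q : List T} (hp : p ∈ shortWords S n) (hqp : q.Sublist p) :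
    q ∈ shortWords S n :=
  ⟨hqp.length_le.trans hp.1, fun x hx => hp.2 x (hqp.subset hx)⟩

end shortWords

/-- The language `a L b`. -/
def sandwich {T : Type*} (a : List T) (L : Set (List T)) (b : List T) : Set (List T) :=
  (fun q => a ++ q ++ b) '' L

section sandwich

variable {T : Type*} {a b p : List T} {L M : Set (List T)}

theorem append_append_mem_sandwich (hp : p ∈ L) : a ++ p ++ b ∈ sandwich a L b :=
  ⟨p, hp, rfl⟩

theorem sandwich_mono (hLM : L ⊆ M) : sandwich a L b ⊆ sandwich a M b :=
  Set.image_mono hLM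

theorem sandwich_nil (L : Set (List T)) : sandwich [] L [] = L := by
  simp [sandwich]

theorem sandwich_singleton (a q b : List T) : sandwich a {q} b = {a ++ q ++ b} :=
  Set.image_singleton

theorem sandwich_sandwich (v a : List T) (L : Set (List T)) (b w : List T) :
    sandwich v (sandwich a L b) w = sandwich (v ++ a) L (b ++ w) := by
  simp [sandwich, Set.image_image]

end sandwich

/-- The language derived from the nonterminal `A`. -/
def derivedLanguage {T N : Type} (rs : List (LinearRule T N)) (A : N) : Set (List T) :=
  {p | LinDerives rs A p}

theorem sandwich_derivedLanguage_subset {T N : Type} {rs : List (LinearRule T N)} {A B : N}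
    {u w : List T} (hr : ⟨A, .inr (u, B, w)⟩ ∈ rs) :
    sandwich u (derivedLanguage rs B) w ⊆ derivedLanguage rs A := by
  rintro _ ⟨q, hq, rfl⟩
  exact LinDerives.step hr hq

namespace LinearRule

variable {T N : Type}

/-- The terminals on the right-hand side of a rule, as a word. -/
def terminals : LinearRule T N → List T
  | ⟨_, .inl u⟩ => u
  | ⟨_, .inr (u, _, w)⟩ => u ++ w

/-- The nonterminals occurring in a rule, on either side. -/
def nonterminals : LinearRule T N → List N
  | ⟨A, .inl _⟩ => [A]
  | ⟨A, .inr (_, B, _)⟩ => [A, B]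

/-- The rules over the alphabet `S` and the nonterminals `V` with at most `n` terminals on the
right-hand side. -/
def bounded (S : Set T) (V : Set N) (n : ℕ) : Set (LinearRule T N) :=
  {r | r.terminals ∈ shortWords S n ∧ ∀ A ∈ r.nonterminals, A ∈ V}

theorem bounded_finite {S : Set T} {V : Set N} (hS : S.Finite) (hV : V.Finite) (n : ℕ) :
    (bounded S V n).Finite := by
  have hW := shortWords_finite hS n
  refine (((hV.prod hW).image fun x => (⟨x.1, .inl x.2⟩ : LinearRule T N)).union
    ((hV.prod (hW.prod (hV.prod hW))).image
      fun x => (⟨x.1, .inr x.2⟩ : LinearRule T N))).subset ?_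
  rintro ⟨A, u | ⟨u, B, w⟩⟩ ⟨hterm, hnonterm⟩
  · exact .inl ⟨(A, u), ⟨hnonterm A (by simp [nonterminals]), hterm⟩, rfl⟩
  · refine .inr ⟨(A, u, B, w), ⟨hnonterm A (by simp [nonterminals]), ?_,
      hnonterm B (by simp [nonterminals]), ?_⟩, rfl⟩
    · exact mem_shortWords_of_sublist hterm (List.sublist_append_left u w)
    · exact mem_shortWords_of_sublist hterm (List.sublist_append_right u w)

/-- The shape of a rule of a grammar in normal form. -/
structure IsNormal (g h : ℕ) (r : LinearRule T N) : Prop where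
  length_eq : ∀ v w, ∀ B : N, r.output = .inr (v, B, w) → v.length = h ∧ w.length = g
  length_lt : ∀ u : List T, r.output = .inl u → u.length < g + h

/-- Soundness of a rule whose nonterminals are languages: the right-hand side, read as a language,
is contained in the left-hand side. -/
def IsSound : LinearRule T (Set (List T)) → Prop
  | ⟨L, .inl u⟩ => u ∈ L
  | ⟨L, .inr (v, L', w)⟩ => sandwich v L' w ⊆ L

end LinearRule

theorem LinDerives.mem_of_isSound {T : Type} {rs : List (LinearRule T (Set (List T)))}
    (hrs : ∀ r ∈ rs, r.IsSound) {L : Set (List T)} {p : List T} (hp : LinDerives rs L p) :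
    p ∈ L := by
  induction hp with
  | terminal hr => exact hrs _ hr
  | step hr _ ih => exact hrs _ hr (append_append_mem_sandwich ih)

theorem LinDerives.forall_mem {T N : Type} {rs : List (LinearRule T N)} {S : Set T}
    (hrs : ∀ r ∈ rs, ∀ x ∈ r.terminals, x ∈ S) {A : N} {p : List T} (hp : LinDerives rs A p) :
    ∀ x ∈ p, x ∈ S := by
  induction hp with
  | terminal hr => exact hrs _ hr
  | step hr _ ih =>
    have huw := List.forall_mem_append.1 (hrs _ hr)
    exact List.forall_mem_append.2 ⟨List.forall_mem_append.2 ⟨huw.1, ih⟩, huw.2⟩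

namespace LinearGrammar

variable {T : Type}

/-- Normal form of a `(g/h)`-rated linear grammar. -/
def IsNormal (g h : ℕ) (G : LinearGrammar T) : Prop :=
  ∀ r ∈ G.rules, r.IsNormal g h

theorem IsNormal.isRated {g h : ℕ} {G : LinearGrammar T} (hG : G.IsNormal g h) :
    G.IsRated g h := by
  intro r hr u w B hout
  obtain ⟨hu, hw⟩ := (hG r hr).length_eq u w B hout
  rw [hu, hw, mul_comm]

theorem exists_rules_subset_bounded (G : LinearGrammar T) :
    ∃ (S : Set T) (V : Set G.NT) (n : ℕ), S.Finite ∧ V.Finite ∧ G.start ∈ V ∧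
      ∀ r ∈ G.rules, r ∈ LinearRule.bounded S V n := by
  let W := G.rules.flatMap LinearRule.terminals
  let X := G.start :: G.rules.flatMap LinearRule.nonterminals
  refine ⟨{x | x ∈ W}, {A | A ∈ X}, W.length, List.finite_toSet W, List.finite_toSet X,
    List.mem_cons_self, fun r hr => ⟨⟨?_, ?_⟩, ?_⟩⟩
  · exact (List.sublist_flatten_of_mem (List.mem_map_of_mem hr)).length_le
  · exact fun x hx => List.mem_flatMap.2 ⟨r, hr, hx⟩
  · exact fun A hA => List.mem_cons_of_mem _ (List.mem_flatMap.2 ⟨r, hr, hA⟩)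

end LinearGrammar

/-- `p` can be peeled inside `L`: `p ∈ v L' w ⊆ L` for some `L'` in the family `F` and words `v`,
`w` of lengths `h`, `g`. -/
def Peels {T : Type} (g h : ℕ) (F : Set (Set (List T))) (L : Set (List T)) (p : List T) : Prop :=
  ∃ v w, v.length = h ∧ w.length = g ∧ ∃ L' ∈ F, p ∈ sandwich v L' w ∧ sandwich v L' w ⊆ L

theorem Peels.mono {T : Type} {g h : ℕ} {F : Set (Set (List T))} {L M : Set (List T)}
    {p : List T} (hp : Peels g h F L p) (hLM : L ⊆ M) : Peels g h F M p := by
  obtain ⟨v, w, hv, hw, L', hL', hpL', hsub⟩ := hp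
  exact ⟨v, w, hv, hw, L', hL', hpL', hsub.trans hLM⟩

section SoundRules

variable {T : Type} {g h : ℕ} {F : Set (Set (List T))} {S : Set T}

/-- The sound rules of normal shape over the alphabet `S`, with nonterminals in the family `F` of
languages. -/
def soundNormalRules (g h : ℕ) (F : Set (Set (List T))) (S : Set T) :
    Set (LinearRule T (Set (List T))) :=
  {r ∈ LinearRule.bounded S F (g + h) | r.IsNormal g h ∧ r.IsSound}

theorem inl_mem_soundNormalRules {L : Set (List T)} {u : List T} (hL : L ∈ F) (hu : u ∈ L)
    (hlen : u.length < g + h) (hS : ∀ x ∈ u, x ∈ S) :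
    ⟨L, .inl u⟩ ∈ soundNormalRules g h F S := by
  refine ⟨⟨⟨hlen.le, hS⟩, ?_⟩, ⟨?_, ?_⟩, hu⟩
  · simpa [LinearRule.nonterminals] using hL
  · rintro _ _ _ ⟨⟩
  · rintro _ ⟨⟩
    exact hlen

theorem inr_mem_soundNormalRules {L L' : Set (List T)} {v w : List T} (hL : L ∈ F) (hL' : L' ∈ F)
    (hv : v.length = h) (hw : w.length = g) (hS : ∀ x ∈ v ++ w, x ∈ S)
    (hsub : sandwich v L' w ⊆ L) : ⟨L, .inr (v, L', w)⟩ ∈ soundNormalRules g h F S := by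
  refine ⟨⟨⟨?_, hS⟩, ?_⟩, ⟨?_, ?_⟩, hsub⟩
  · simp only [LinearRule.terminals, List.length_append]
    omega
  · simpa [LinearRule.nonterminals] using ⟨hL, hL'⟩
  · rintro _ _ _ ⟨⟩
    exact ⟨hv, hw⟩
  · rintro _ ⟨⟩

theorem linDerives_of_peels {rs : List (LinearRule T (Set (List T)))}
    (hrs : ∀ r ∈ soundNormalRules g h F S, r ∈ rs) (hgh : 0 < g + h)
    (hFS : ∀ L ∈ F, ∀ p ∈ L, ∀ x ∈ p, x ∈ S)
    (hpeel : ∀ L ∈ F, ∀ p ∈ L, g + h ≤ p.length → Peels g h F L p)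
    {L : Set (List T)} (hL : L ∈ F) {p : List T} (hp : p ∈ L) : LinDerives rs L p := by
  induction hn : p.length using Nat.strong_induction_on generalizing p L with
  | _ n ih =>
    rcases lt_or_ge p.length (g + h) with hlen | hlen
    · exact .terminal (hrs _ (inl_mem_soundNormalRules hL hp hlen (hFS L hL p hp)))
    · obtain ⟨v, w, hv, hw, L', hL', ⟨p', hp', rfl⟩, hsub⟩ := hpeel L hL p hp hlen
      have hvw : ∀ x ∈ v ++ w, x ∈ S := fun x hx => by
        refine hFS L hL _ hp x ?_
        simp only [List.mem_append] at hx ⊢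
        tauto
      have hshorter : p'.length < n := by
        simp only [List.length_append] at hn
        omega
      exact .step (hrs _ (inr_mem_soundNormalRules hL hL' hv hw hvw hsub))
        (ih _ hshorter hL' hp' rfl)

theorem exists_isNormal_language_eq_of_peels (hgh : 0 < g + h) (hF : F.Finite) (hS : S.Finite)
    (hFS : ∀ L ∈ F, ∀ p ∈ L, ∀ x ∈ p, x ∈ S)
    (hpeel : ∀ L ∈ F, ∀ p ∈ L, g + h ≤ p.length → Peels g h F L p)
    {L : Set (List T)} (hL : L ∈ F) :
    ∃ G : LinearGrammar T, G.IsNormal g h ∧ G.language = L := by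
  have hfin : (soundNormalRules g h F S).Finite :=
    (LinearRule.bounded_finite hS hF (g + h)).subset (Set.sep_subset _ _)
  have hmem : ∀ r, r ∈ hfin.toFinset.toList ↔ r ∈ soundNormalRules g h F S := by simp
  refine ⟨⟨Set (List T), L, hfin.toFinset.toList⟩, fun r hr => ((hmem r).1 hr).2.1, ?_⟩
  ext p
  exact ⟨LinDerives.mem_of_isSound fun r hr => ((hmem r).1 hr).2.2,
    linDerives_of_peels (fun r => (hmem r).2) hgh hFS hpeel hL⟩

end SoundRules

section Pieces

variable {T : Type} {g h n : ℕ} {G : LinearGrammar T} {S : Set T} {V : Set G.NT}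

/-- The languages that remain when words derived by `G` are peeled: singletons of short words, and
the languages `a L(B) b` with `a`, `b` short and of rate `g/h`. -/
def pieces (g h : ℕ) (G : LinearGrammar T) (S : Set T) (V : Set G.NT) (n : ℕ) :
    Set (Set (List T)) :=
  {L | ∃ q ∈ shortWords S n, L = {q}} ∪
    {L | ∃ a ∈ shortWords S n, ∃ B ∈ V, ∃ b ∈ shortWords S n,
      h * b.length = g * a.length ∧ L = sandwich a (derivedLanguage G.rules B) b}

theorem pieces_finite (g h : ℕ) (hS : S.Finite) (hV : V.Finite) (n : ℕ) :
    (pieces g h G S V n).Finite := by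
  have hW := shortWords_finite hS n
  refine (hW.image fun q => ({q} : Set (List T))).subset ?_ |>.union <|
    ((hW.prod (hV.prod hW)).image
      fun x => sandwich x.1 (derivedLanguage G.rules x.2.1) x.2.2).subset ?_
  · rintro _ ⟨q, hq, rfl⟩
    exact ⟨q, hq, rfl⟩
  · rintro _ ⟨a, ha, B, hB, b, hb, -, rfl⟩
    exact ⟨(a, B, b), ⟨ha, hB, hb⟩, rfl⟩

theorem derivedLanguage_mem_pieces {A : G.NT} (hA : A ∈ V) :
    derivedLanguage G.rules A ∈ pieces g h G S V n := by
  have hnil : [] ∈ shortWords S n := ⟨Nat.zero_le n, by simp⟩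
  exact .inr ⟨[], hnil, A, hA, [], hnil, rfl, (sandwich_nil _).symm⟩

theorem forall_mem_of_mem_pieces (hrules : ∀ r ∈ G.rules, r ∈ LinearRule.bounded S V n)
    {L : Set (List T)} (hL : L ∈ pieces g h G S V n) {p : List T} (hp : p ∈ L) :
    ∀ x ∈ p, x ∈ S := by
  rcases hL with ⟨q, hq, rfl⟩ | ⟨a, ha, B, -, b, hb, -, rfl⟩
  · obtain rfl := hp
    exact hq.2
  · obtain ⟨q, hq, rfl⟩ := hp
    have hqS := LinDerives.forall_mem (fun r hr => (hrules r hr).1.2) hq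
    exact List.forall_mem_append.2 ⟨List.forall_mem_append.2 ⟨ha.2, hqS⟩, hb.2⟩

theorem peels_pieces_singleton {a u b : List T} (hu : u ∈ shortWords S n) (ha : a.length ≤ h)
    (hb : b.length ≤ g) (hlen : g + h ≤ (a ++ u ++ b).length) :
    Peels g h (pieces g h G S V n) {a ++ u ++ b} (a ++ u ++ b) := by
  simp only [List.length_append] at hlen
  obtain ⟨s, m, rfl, hs⟩ : ∃ s m, u = s ++ m ∧ (a ++ s).length = h :=
    exists_append_left_length_eq ha (by rw [List.length_append]; omega)
  obtain ⟨m, t, rfl, ht⟩ : ∃ m' t, m = m' ++ t ∧ (t ++ b).length = g :=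
    exists_append_right_length_eq hb (by simp only [List.length_append] at *; omega)
  have hm : m ∈ shortWords S n := mem_shortWords_of_sublist hu
    ((List.sublist_append_left m t).trans (List.sublist_append_right s (m ++ t)))
  have hpeeled : sandwich (a ++ s) {m} (t ++ b) = {a ++ (s ++ (m ++ t)) ++ b} := by
    simp [sandwich_singleton]
  exact ⟨a ++ s, t ++ b, hs, ht, {m}, .inl ⟨m, hm, rfl⟩, hpeeled.ge rfl, hpeeled.le⟩

theorem peels_pieces_sandwich_of_le {a u q w b : List T} {B : G.NT} (hu : u ∈ shortWords S n)
    (hw : w ∈ shortWords S n) (hB : B ∈ V) (hq : q ∈ derivedLanguage G.rules B) (ha : a.length ≤ h)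
    (hb : b.length ≤ g) (hau : h ≤ (a ++ u).length) (hwb : g ≤ (w ++ b).length)
    (hrate : h * (w ++ b).length = g * (a ++ u).length) :
    Peels g h (pieces g h G S V n) (sandwich (a ++ u) (derivedLanguage G.rules B) (w ++ b))
      (a ++ u ++ q ++ (w ++ b)) := by
  obtain ⟨s, u, rfl, hs⟩ := exists_append_left_length_eq ha hau
  obtain ⟨w, t, rfl, ht⟩ := exists_append_right_length_eq hb hwb
  have hu' := mem_shortWords_of_sublist hu (List.sublist_append_right s u)
  have hw' := mem_shortWords_of_sublist hw (List.sublist_append_left w t)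
  have hrest : h * w.length = g * u.length := by
    have hwb_length : (w ++ t ++ b).length = w.length + g := by
      rw [List.append_assoc, List.length_append, ht]
    have hau_length : (a ++ (s ++ u)).length = h + u.length := by
      rw [← List.append_assoc, List.length_append, hs]
    rw [hwb_length, hau_length] at hrate
    linarith
  have hpeeled : sandwich (a ++ s) (sandwich u (derivedLanguage G.rules B) w) (t ++ b) =
      sandwich (a ++ (s ++ u)) (derivedLanguage G.rules B) (w ++ t ++ b) := by
    simp only [sandwich_sandwich, List.append_assoc]
  exact ⟨a ++ s, t ++ b, hs, ht, _, .inr ⟨u, hu', B, hB, w, hw', hrest, rfl⟩,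
    hpeeled.ge (append_append_mem_sandwich hq), hpeeled.le⟩

theorem peels_pieces_sandwich_of_linDerives (hrules : ∀ r ∈ G.rules, r ∈ LinearRule.bounded S V n)
    (hG : G.IsRated g h) {A : G.NT} {a q b : List T} (hq : LinDerives G.rules A q)
    (ha : a.length ≤ h) (hb : b.length ≤ g) (hab : h * b.length = g * a.length)
    (hlen : g + h ≤ (a ++ q ++ b).length) :
    Peels g h (pieces g h G S V n) (sandwich a (derivedLanguage G.rules A) b) (a ++ q ++ b) := by
  induction hq generalizing a b with
  | terminal hr =>
    refine (peels_pieces_singleton (hrules _ hr).1 ha hb hlen).mono (Set.singleton_subset_iff.2 ?_)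
    exact append_append_mem_sandwich (.terminal hr)
  | @step A B u w q hr hq ih =>
    have hregroup : a ++ (u ++ q ++ w) ++ b = a ++ u ++ q ++ (w ++ b) := by simp
    have hsub : sandwich (a ++ u) (derivedLanguage G.rules B) (w ++ b) ⊆
        sandwich a (derivedLanguage G.rules A) b := by
      rw [← sandwich_sandwich]
      exact sandwich_mono (sandwich_derivedLanguage_subset hr)
    have hrate : h * (w ++ b).length = g * (a ++ u).length := by
      simp only [List.length_append, mul_add, hab, hG _ hr u w B rfl, add_comm]
    rw [hregroup] at hlen ⊢
    refine Peels.mono ?_ hsub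
    rcases le_and_le_or_ge_and_ge_of_mul_eq_mul hrate with ⟨hau, hwb⟩ | ⟨hau, hwb⟩
    · obtain ⟨hterm, hnonterm⟩ := hrules _ hr
      exact peels_pieces_sandwich_of_le
        (mem_shortWords_of_sublist hterm (List.sublist_append_left u w))
        (mem_shortWords_of_sublist hterm (List.sublist_append_right u w))
        (hnonterm B (by simp [LinearRule.nonterminals])) hq ha hb hau hwb hrate
    · exact ih hau hwb hrate hlen

theorem peels_of_mem_pieces (hrules : ∀ r ∈ G.rules, r ∈ LinearRule.bounded S V n)
    (hG : G.IsRated g h) {L : Set (List T)} (hL : L ∈ pieces g h G S V n) {p : List T}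
    (hp : p ∈ L) (hlen : g + h ≤ p.length) : Peels g h (pieces g h G S V n) L p := by
  rcases hL with ⟨q, hq, rfl⟩ | ⟨a, ha, B, hB, b, hb, hab, rfl⟩
  · obtain rfl := hp
    simpa using peels_pieces_singleton (a := []) (b := []) hq (Nat.zero_le h) (Nat.zero_le g)
      (by simpa using hlen)
  · obtain ⟨q, hq, rfl⟩ := hp
    rcases le_and_le_or_ge_and_ge_of_mul_eq_mul hab with ⟨hah, hbg⟩ | ⟨hah, hbg⟩
    · simpa using peels_pieces_sandwich_of_le (a := []) (b := []) ha hb hB hq (Nat.zero_le h)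
        (Nat.zero_le g) hah (by simpa using hbg) (by simpa using hab)
    · exact peels_pieces_sandwich_of_linDerives hrules hG hq hah hbg hab hlen

end Pieces

theorem rated_linear_normal_form_general {T : Type} {g h : ℕ} (hgh : 0 < g + h)
    (G : LinearGrammar T) (hG : G.IsRated g h) :
    ∃ G' : LinearGrammar T, G'.IsNormal g h ∧ G'.language = G.language := by
  obtain ⟨S, V, n, hS, hV, hstart, hrules⟩ := G.exists_rules_subset_bounded
  exact exists_isNormal_language_eq_of_peels hgh (pieces_finite g h hS hV n) hS
    (fun _ hL _ hp => forall_mem_of_mem_pieces hrules hL hp)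
    (fun _ hL _ hp hlen => peels_of_mem_pieces hrules hG hL hp hlen)
    (derivedLanguage_mem_pieces hstart)

/-- **Normal form for `k`-rated linear grammars** (Lemma 1).  Every
`(g/h)`-rated linear grammar (`g, h` coprime, `h ≠ 0`) has an equivalent one
(generating the same language up to the empty word) in which every production
`A → v B w` satisfies `|v| = h` and `|w| = g`, and every terminating production
`A → u` satisfies `|u| < g + h`. -/
theorem rated_linear_normal_form {T : Type} (g h : ℕ) (hgh : Nat.Coprime g h) (hh : h ≠ 0)
    (G : LinearGrammar T) (hG : G.IsRated g h) :
    ∃ G' : LinearGrammar T, G'.IsRated g h ∧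
      (∀ p : List T, p ≠ [] → (p ∈ G.language ↔ p ∈ G'.language)) ∧
      (∀ r ∈ G'.rules, ∀ v w, ∀ B : G'.NT, r.output = Sum.inr (v, B, w) →
        v.length = h ∧ w.length = g) ∧
      (∀ r ∈ G'.rules, ∀ u : List T, r.output = Sum.inl u → u.length < g + h) := by
  obtain ⟨G', hG', hlang⟩ := rated_linear_normal_form_general (by omega : 0 < g + h) G hG
  exact ⟨G', hG'.isRated, fun p _ => by rw [hlang], fun r hr => (hG' r hr).length_eq,
    fun r hr => (hG' r hr).length_lt⟩
end

section
/- Let L be a context-free language that is not linear. Then there exist infinitely many words p ∈ L admitting a factorization p = r s t u v w x y z satisfying: (1) r s^i t u^i v w^j x y^j z ∈ L for all integers i, j ≥ 0; (2) s u is nonempty; (3) w y is nonempty. -/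
/-!
Work with the languages of sentential forms, in the semiring of languages. An arbitrary context-free
grammar (no normal form) pumps every infinite sentential form: if some nonterminal `A` inside has a
nontrivial loop `A ⇒* x A y`, pump the loop; otherwise cutting derivations at a lowest occurrence of
`A` shows that the words of `A` come from bodies of `A`-rules expanded without `A`-rules, and one
argues by induction on the set of rules.

A rule body with two infinite factors can be pumped in both of them independently. If this never
happens, every useful rule body has at most one infinite symbol, and replacing the other symbols by
the finitely many words they derive produces an equivalent linear grammar.
-/

section Words

variable {T : Type}

lemma ofList_wordPow (v : List T) (n : ℕ) :
    FreeMonoid.ofList (wordPow v n) = FreeMonoid.ofList v ^ n := by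
  induction n with
  | zero => rfl
  | succ n ih => rw [pow_succ', ← ih]; rfl

lemma wordPow_one (v : List T) : wordPow v 1 = v := by
  simp only [wordPow, List.append_nil]

lemma wordPow_succ_eq_append (v : List T) (n : ℕ) : wordPow v (n + 1) = wordPow v n ++ v :=
  FreeMonoid.ofList.injective <| by
    rw [FreeMonoid.ofList_append, ofList_wordPow, ofList_wordPow, pow_succ]

lemma wordPow_wordPow (v : List T) (m n : ℕ) : wordPow (wordPow v m) n = wordPow v (m * n) :=
  FreeMonoid.ofList.injective <| by simp only [ofList_wordPow, pow_mul]

lemma length_wordPow (v : List T) (n : ℕ) : (wordPow v n).length = n * v.length := by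
  induction n with
  | zero => simp [wordPow]
  | succ n ih => rw [wordPow, List.length_append, ih, Nat.succ_mul, Nat.add_comm]

end Words

section Contexts

variable {T : Type*} {x y x' y' u v : List T} {J K L M : Language T}

/-- The pair of words `(x, y)` is a context carrying every word of `K` to a word of `L`. For the
languages of two sentential forms `β` and `α` this is the semantic counterpart of `α ⇒* x β y`. -/
def IsContext (x y : List T) (K L : Language T) : Prop :=
  ∀ w ∈ K, x ++ w ++ y ∈ L

lemma isContext_nil_nil : IsContext [] [] K L ↔ K ≤ L := by
  simp only [IsContext, List.nil_append, List.append_nil]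
  rfl

lemma IsContext.comp (hL : IsContext x y K L) (hK : IsContext x' y' J K) :
    IsContext (x ++ x') (y' ++ y) J L := fun w hw => by
  simpa using hL _ (hK w hw)

lemma isContext_mul_left (hu : u ∈ L) : IsContext u [] K (L * K) := fun w hw => by
  simpa using Language.append_mem_mul hu hw

lemma isContext_mul_right (hv : v ∈ M) : IsContext [] v K (K * M) := fun w hw => by
  simpa using Language.append_mem_mul hw hv

lemma isContext_mul_mul (hu : u ∈ L) (hv : v ∈ M) : IsContext u v K (L * K * M) := fun _ hw =>
  Language.append_mem_mul (Language.append_mem_mul hu hw) hv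

end Contexts

section Pumping

variable {T : Type} {x y s u : List T} {K L : Language T}

/-- The language contains a family `r sⁱ t uⁱ v`, `i ≥ 0`, with `s u` nonempty. -/
def Pumpable (L : Language T) : Prop :=
  ∃ r s t u v : List T, s ++ u ≠ [] ∧ ∀ i : ℕ, r ++ wordPow s i ++ t ++ wordPow u i ++ v ∈ L

/-- The word `p` has two disjoint pairs of factors that can be pumped independently inside `L`. -/
def IsDoublyPumpableWord (L : Language T) (p : List T) : Prop :=
  ∃ r s t u v w x y z : List T,
    p = r ++ s ++ t ++ u ++ v ++ w ++ x ++ y ++ z ∧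
    (∀ i j : ℕ, r ++ wordPow s i ++ t ++ wordPow u i ++ v ++
      wordPow w j ++ x ++ wordPow y j ++ z ∈ L) ∧
    s ++ u ≠ [] ∧ w ++ y ≠ []

/-- The language has a word with two independently pumpable pairs of factors; such a word lies
in `L`, being the case `i = j = 1` of the pumped family. -/
def DoublyPumpable (L : Language T) : Prop :=
  ∃ p, IsDoublyPumpableWord L p

lemma Pumpable.of_isContext (hc : IsContext x y K L) (hK : Pumpable K) : Pumpable L := by
  obtain ⟨r, s, t, u, v, hsu, hp⟩ := hK
  exact ⟨x ++ r, s, t, u, v ++ y, hsu, fun i => by simpa using hc _ (hp i)⟩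

lemma Pumpable.mono (hKL : K ≤ L) (hK : Pumpable K) : Pumpable L :=
  hK.of_isContext (isContext_nil_nil.mpr hKL)

lemma pumpable_of_isContext_self (hc : IsContext s u L L) (hsu : s ++ u ≠ [])
    (hL : ∃ t, t ∈ L) : Pumpable L := by
  obtain ⟨t, ht⟩ := hL
  refine ⟨[], s, t, u, [], hsu, fun i => ?_⟩
  induction i with
  | zero => simpa [wordPow] using ht
  | succ i ih =>
    rw [wordPow_succ_eq_append u]
    simpa [wordPow] using hc _ ih

lemma DoublyPumpable.of_isContext (hc : IsContext x y K L) (hK : DoublyPumpable K) :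
    DoublyPumpable L := by
  obtain ⟨-, r, s, t, u, v, w, x', y', z, -, hp, hsu, hwy⟩ := hK
  exact ⟨_, x ++ r, s, t, u, v, w, x', y', z ++ y, rfl, fun i j => by simpa using hc _ (hp i j),
    hsu, hwy⟩

lemma DoublyPumpable.mono (hKL : K ≤ L) (hK : DoublyPumpable K) : DoublyPumpable L :=
  hK.of_isContext (isContext_nil_nil.mpr hKL)

lemma Pumpable.mul (hK : Pumpable K) (hL : Pumpable L) : DoublyPumpable (K * L) := by
  obtain ⟨r, s, t, u, v, hsu, hp⟩ := hK
  obtain ⟨r', w, x, y, z, hwy, hq⟩ := hL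
  exact ⟨_, r, s, t, u, v ++ r', w, x, y, z, rfl,
    fun i j => by simpa using Language.append_mem_mul (hp i) (hq j), hsu, hwy⟩

lemma DoublyPumpable.infinite (hL : DoublyPumpable L) :
    {p | p ∈ L ∧ IsDoublyPumpableWord L p}.Infinite := by
  obtain ⟨-, r, s, t, u, v, w, x, y, z, -, hp, hsu, hwy⟩ := hL
  let word (n : ℕ) : List T :=
    r ++ wordPow s (n + 1) ++ t ++ wordPow u (n + 1) ++ v ++ w ++ x ++ y ++ z
  have word_mem (n : ℕ) : word n ∈ L := by
    simpa only [wordPow_one] using hp (n + 1) 1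
  have powers_ne_nil (n : ℕ) : wordPow s (n + 1) ++ wordPow u (n + 1) ≠ [] := by
    simp only [wordPow, ne_eq, List.append_eq_nil_iff] at hsu ⊢
    tauto
  have word_doublyPumpable (n : ℕ) : IsDoublyPumpableWord L (word n) :=
    ⟨r, wordPow s (n + 1), t, wordPow u (n + 1), v, w, x, y, z, rfl,
      fun i j => by simpa only [wordPow_wordPow] using hp ((n + 1) * i) j, powers_ne_nil n, hwy⟩
  have length_word_strictMono : StrictMono fun n => (word n).length := by
    have hpos : 0 < s.length + u.length := by
      simpa only [List.length_append] using List.length_pos_iff.mpr hsu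
    refine strictMono_nat_of_lt_succ fun n => ?_
    simp only [word, List.length_append, length_wordPow, Nat.succ_mul]
    omega
  have word_injective : Function.Injective word :=
    Function.Injective.of_comp (f := List.length) length_word_strictMono.injective
  exact Set.infinite_of_injective_forall_mem word_injective fun n =>
    ⟨word_mem n, word_doublyPumpable n⟩

end Pumping

section Forms

variable {T N : Type*} {R R' : Set (ContextFreeRule T N)} {r : ContextFreeRule T N}
  {α β γ : List (Symbol T N)} {A : N} {u v w : List T}

/-- `Yields R α w`: the sentential form `α` derives the terminal word `w` using rules from `R`.
The constructors build a derivation forest whose roots are the symbols of `α`, which makes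
induction on derivations available without reordering rewriting steps. -/
inductive Yields (R : Set (ContextFreeRule T N)) : List (Symbol T N) → List T → Prop
  | nil : Yields R [] []
  | terminal (a : T) {α : List (Symbol T N)} {w : List T} (hw : Yields R α w) :
      Yields R (.terminal a :: α) (a :: w)
  | nonterminal {r : ContextFreeRule T N} (hr : r ∈ R) {α : List (Symbol T N)} {u w : List T}
      (hu : Yields R r.output u) (hw : Yields R α w) :
      Yields R (.nonterminal r.input :: α) (u ++ w)

/-- The language of terminal words derived from the sentential form `α` with the rules `R`. -/
def formLanguage (R : Set (ContextFreeRule T N)) (α : List (Symbol T N)) : Language T :=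
  {w | Yields R α w}

lemma Yields.append (hu : Yields R α u) (hv : Yields R β v) : Yields R (α ++ β) (u ++ v) := by
  induction hu with
  | nil => exact hv
  | terminal a _ ih => exact .terminal a ih
  | nonterminal hr hu _ _ ih =>
    rw [List.append_assoc]
    exact .nonterminal hr hu ih

lemma Yields.exists_append (h : Yields R (α ++ β) w) :
    ∃ u v, Yields R α u ∧ Yields R β v ∧ u ++ v = w := by
  induction α generalizing w with
  | nil => exact ⟨[], w, .nil, h, rfl⟩
  | cons X α ih =>
    cases h with
    | terminal a h =>
      obtain ⟨u, v, hu, hv, rfl⟩ := ih h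
      exact ⟨a :: u, v, .terminal a hu, hv, rfl⟩
    | nonterminal hr hroot h =>
      obtain ⟨u, v, hu, hv, rfl⟩ := ih h
      exact ⟨_, v, .nonterminal hr hroot hu, hv, List.append_assoc _ _ _⟩

lemma Yields.mono (hR : R' ⊆ R) (h : Yields R' α w) : Yields R α w := by
  induction h with
  | nil => exact .nil
  | terminal a _ ih => exact .terminal a ih
  | nonterminal hr _ _ ihu ihw => exact .nonterminal (hR hr) ihu ihw

lemma formLanguage_mono (hR : R' ⊆ R) (α : List (Symbol T N)) :
    formLanguage R' α ≤ formLanguage R α :=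
  fun _ => Yields.mono hR

lemma formLanguage_nil : formLanguage R ([] : List (Symbol T N)) = 1 := by
  ext w
  exact ⟨fun h => by cases h; rfl, fun h => by cases h; exact .nil⟩

lemma formLanguage_append : formLanguage R (α ++ β) = formLanguage R α * formLanguage R β := by
  ext w
  rw [Language.mem_mul]
  constructor
  · intro h
    obtain ⟨u, v, hu, hv, rfl⟩ := Yields.exists_append h
    exact ⟨u, hu, v, hv, rfl⟩
  · rintro ⟨u, hu, v, hv, rfl⟩
    exact Yields.append hu hv

lemma formLanguage_cons (X : Symbol T N) :
    formLanguage R (X :: α) = formLanguage R [X] * formLanguage R α :=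
  formLanguage_append (α := [X])

lemma formLanguage_append_cons (X : Symbol T N) :
    formLanguage R (α ++ X :: β) = formLanguage R α * formLanguage R [X] * formLanguage R β := by
  rw [formLanguage_append, formLanguage_cons, mul_assoc]

lemma formLanguage_terminal (a : T) :
    formLanguage R ([.terminal a] : List (Symbol T N)) = {[a]} := by
  ext w
  constructor
  · rintro (_ | ⟨_, ⟨⟩⟩)
    rfl
  · rintro rfl
    exact .terminal a .nil

lemma mem_formLanguage_nonterminal :
    w ∈ formLanguage R [.nonterminal A] ↔ ∃ r ∈ R, r.input = A ∧ w ∈ formLanguage R r.output := by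
  constructor
  · rintro (_ | _ | ⟨hr, hu, ⟨⟩⟩)
    rw [List.append_nil]
    exact ⟨_, hr, rfl, hu⟩
  · rintro ⟨r, hr, rfl, hw⟩
    rw [← List.append_nil w]
    exact .nonterminal hr hw .nil

lemma formLanguage_output_le (hr : r ∈ R) :
    formLanguage R r.output ≤ formLanguage R [.nonterminal r.input] :=
  fun _ hw => mem_formLanguage_nonterminal.mpr ⟨r, hr, rfl, hw⟩

lemma exists_isContext_of_mem {X : Symbol T N} (hX : X ∈ α) (hw : w ∈ formLanguage R α) :
    ∃ x y, IsContext x y (formLanguage R [X]) (formLanguage R α) := by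
  obtain ⟨β, γ, rfl⟩ := List.append_of_mem hX
  rw [formLanguage_append_cons] at hw ⊢
  obtain ⟨_, ⟨x, hx, _, -, -⟩, y, hy, -⟩ := hw
  exact ⟨x, y, isContext_mul_mul hx hy⟩

lemma exists_infinite_nonterminal (hα : (formLanguage R α).Infinite) :
    ∃ β A γ, α = β ++ .nonterminal A :: γ ∧ (formLanguage R [.nonterminal A]).Infinite := by
  induction α with
  | nil =>
    rw [formLanguage_nil] at hα
    exact absurd (Set.finite_singleton []) hα
  | cons X α ih =>
    by_cases htail : (formLanguage R α).Infinite
    · obtain ⟨β, A, γ, rfl, hA⟩ := ih htail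
      exact ⟨X :: β, A, γ, rfl, hA⟩
    · have hhead : (formLanguage R [X]).Infinite := fun hX => hα <| by
        rw [formLanguage_cons]
        exact hX.image2 _ (Set.not_infinite.mp htail)
      cases X with
      | nonterminal A => exact ⟨[], A, α, rfl, hhead⟩
      | terminal a =>
        rw [formLanguage_terminal] at hhead
        exact absurd (Set.finite_singleton [a]) hhead

/-- Induction on derivation trees, for a property given by the languages `P A`. Quantifying over all
occurrences of nonterminals in a form provides the induction hypothesis for every subtree. -/
lemma Yields.mem_mul_mul_of_closed {P : N → Language T}
    (hP : ∀ r ∈ R, ∀ w ∈ formLanguage R r.output,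
      (∀ α B β, r.output = α ++ .nonterminal B :: β →
        w ∈ formLanguage R α * P B * formLanguage R β) → w ∈ P r.input)
    (h : Yields R γ w) (hγ : γ = α ++ .nonterminal A :: β) :
    w ∈ formLanguage R α * P A * formLanguage R β := by
  induction h generalizing α A β with
  | nil => simp at hγ
  | terminal a _ ih =>
    cases α with
    | nil => simp at hγ
    | cons X α =>
      obtain ⟨rfl, htail⟩ := List.cons.inj hγ
      rw [formLanguage_cons, mul_assoc, mul_assoc, ← mul_assoc (formLanguage R α)]
      exact Language.append_mem_mul (a := [a]) (.terminal a .nil) (ih htail)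
  | @nonterminal r hr _ u w hu hw ihu ihw =>
    cases α with
    | nil =>
      obtain ⟨hA, rfl⟩ := List.cons.inj hγ
      obtain rfl := Symbol.nonterminal.inj hA
      rw [formLanguage_nil, one_mul]
      exact Language.append_mem_mul (hP r hr u hu fun _ _ _ => ihu) hw
    | cons X α =>
      obtain ⟨rfl, htail⟩ := List.cons.inj hγ
      rw [formLanguage_cons, mul_assoc, mul_assoc, ← mul_assoc (formLanguage R α)]
      exact Language.append_mem_mul (formLanguage_output_le hr hu) (ihw htail)

end Forms

section Grammar

variable {T : Type*} {g : ContextFreeGrammar T} {α : List (Symbol T g.NT)} {w : List T}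

lemma Yields.derives (h : Yields g.rules α w) : g.Derives α (w.map .terminal) := by
  induction h with
  | nil => rfl
  | terminal a _ ih => exact ih.append_left [.terminal a]
  | @nonterminal r hr α u w _ _ ihu ihw =>
    have hstep : g.Produces (.nonterminal r.input :: α) (r.output ++ α) := ⟨r, hr, .head α⟩
    rw [List.map_append]
    exact hstep.trans_derives ((ihu.append_right α).trans (ihw.append_left _))

lemma yields_map_terminal {N : Type*} (R : Set (ContextFreeRule T N)) (w : List T) :
    Yields R (w.map .terminal) w := by
  induction w with
  | nil => exact .nil
  | cons a w ih => exact .terminal a ih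

lemma yields_of_derives (h : g.Derives α (w.map .terminal)) : Yields g.rules α w := by
  induction h using Relation.ReflTransGen.head_induction_on with
  | refl => exact yields_map_terminal _ w
  | head hstep _ ih =>
    obtain ⟨r, hr, hrw⟩ := hstep
    obtain ⟨β, γ, rfl, rfl⟩ := hrw.exists_parts
    obtain ⟨_, c, hab, hc, rfl⟩ := ih.exists_append
    obtain ⟨a, b, ha, hb, rfl⟩ := hab.exists_append
    exact (ha.append (formLanguage_output_le hr hb)).append hc

lemma language_eq_formLanguage (g : ContextFreeGrammar T) :
    g.language = formLanguage g.rules [.nonterminal g.initial] :=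
  Language.ext fun _ => ⟨yields_of_derives, Yields.derives⟩

end Grammar

section RuleElimination

variable {T N : Type*} {R : Set (ContextFreeRule T N)} {α : List (Symbol T N)} {A : N} {w : List T}

/-- The rules in `R` for nonterminals other than `A`. -/
def rulesAvoiding (R : Set (ContextFreeRule T N)) (A : N) : Set (ContextFreeRule T N) :=
  {r ∈ R | r.input ≠ A}

/-- Every loop `A ⇒* x A y` with terminal words `x` and `y`, understood in the semantic sense of
`IsContext`, has `x` and `y` empty. -/
def HasTrivialLoops (R : Set (ContextFreeRule T N)) (A : N) : Prop :=
  ∀ x y, IsContext x y (formLanguage R [.nonterminal A]) (formLanguage R [.nonterminal A]) →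
    x ++ y = []

lemma rulesAvoiding_subset (R : Set (ContextFreeRule T N)) (A : N) : rulesAvoiding R A ⊆ R :=
  Set.sep_subset _ _

lemma Yields.avoids_or_exists_lowest (A : N) (h : Yields R α w) :
    Yields (rulesAvoiding R A) α w ∨
      ∃ x y v, w = x ++ v ++ y ∧
        IsContext x y (formLanguage R [.nonterminal A]) (formLanguage R α) ∧
        ∃ r ∈ R, r.input = A ∧ v ∈ formLanguage (rulesAvoiding R A) r.output := by
  induction h with
  | nil => exact .inl .nil
  | terminal a _ ih =>
    rcases ih with havoid | ⟨x, y, v, rfl, hc, hlow⟩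
    · exact .inl (.terminal a havoid)
    · exact .inr ⟨a :: x, y, v, rfl, fun p hp => .terminal a (hc p hp), hlow⟩
  | @nonterminal r hr α u w hu hw ihu ihw =>
    rw [formLanguage_cons (α := α)]
    have hroot := formLanguage_output_le hr
    have hright {K : Language T} : IsContext [] w K (K * formLanguage R α) := isContext_mul_right hw
    rcases ihu with havoid | ⟨x, y, v, rfl, hc, hlow⟩
    · by_cases hA : r.input = A
      · subst hA
        exact .inr ⟨[], w, u, rfl, hright, r, hr, rfl, havoid⟩
      · rcases ihw with havoid' | ⟨x, y, v, rfl, hc, hlow⟩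
        · have hr' : r ∈ rulesAvoiding R A := ⟨hr, hA⟩
          exact .inl (.nonterminal hr' havoid havoid')
        · exact .inr ⟨u ++ x, y, v, by simp, by
            simpa using (isContext_mul_left (hroot hu)).comp hc, hlow⟩
    · have hc' := (isContext_nil_nil.mpr hroot).comp hc
      exact .inr ⟨x, y ++ w, v, by simp, by simpa using hright.comp hc', hlow⟩

lemma HasTrivialLoops.exists_rule (hloop : HasTrivialLoops R A)
    (hw : w ∈ formLanguage R [.nonterminal A]) :
    ∃ r ∈ R, r.input = A ∧ w ∈ formLanguage (rulesAvoiding R A) r.output := by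
  rcases Yields.avoids_or_exists_lowest A hw with havoid | ⟨x, y, v, rfl, hc, hlow⟩
  · obtain ⟨r, hr, hrA, -⟩ := mem_formLanguage_nonterminal.mp havoid
    exact absurd hrA hr.2
  · obtain ⟨rfl, rfl⟩ := List.append_eq_nil_iff.mp (hloop x y hc)
    simpa using hlow

lemma HasTrivialLoops.exists_infinite_output (hloop : HasTrivialLoops R A) (hR : R.Finite)
    (hA : (formLanguage R [.nonterminal A]).Infinite) :
    ∃ r ∈ R, r.input = A ∧ (formLanguage (rulesAvoiding R A) r.output).Infinite := by
  by_contra! hfin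
  have hunion : (⋃ r ∈ {r ∈ R | r.input = A},
      (formLanguage (rulesAvoiding R A) r.output : Set (List T))).Finite :=
    (hR.sep _).biUnion fun r hr => Set.not_infinite.mp (hfin r hr.1 hr.2)
  refine hA (hunion.subset fun w hw => ?_)
  obtain ⟨r, hr, hrA, hw⟩ := hloop.exists_rule hw
  exact Set.mem_biUnion ⟨hr, hrA⟩ hw

end RuleElimination

section InfiniteForms

variable {T : Type} {N : Type*} {R : Set (ContextFreeRule T N)} {α β : List (Symbol T N)}
  {w : List T}

theorem pumpable_formLanguage_of_infinite (hR : R.Finite) (hα : (formLanguage R α).Infinite) :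
    Pumpable (formLanguage R α) := by
  induction hn : R.ncard using Nat.strong_induction_on generalizing R α with
  | _ n ih =>
    subst hn
    obtain ⟨β, A, γ, hsplit, hA⟩ := exists_infinite_nonterminal hα
    obtain ⟨_, hw⟩ := hα.nonempty
    obtain ⟨x, y, hc⟩ := exists_isContext_of_mem (X := .nonterminal A) (by simp [hsplit]) hw
    refine Pumpable.of_isContext hc ?_
    by_cases hloop : HasTrivialLoops R A
    · obtain ⟨r, hr, rfl, hinf⟩ := hloop.exists_infinite_output hR hA
      have hsub := rulesAvoiding_subset R r.input
      have hcard : (rulesAvoiding R r.input).ncard < R.ncard :=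
        Set.ncard_lt_ncard (hsub.ssubset_of_mem_notMem hr fun h => h.2 rfl) hR
      exact (ih _ hcard (hR.subset hsub) hinf rfl).mono
        ((formLanguage_mono hsub _).trans (formLanguage_output_le hr))
    · unfold HasTrivialLoops at hloop
      push Not at hloop
      obtain ⟨s, u, hsu, hne⟩ := hloop
      exact pumpable_of_isContext_self hsu hne hA.nonempty

lemma doublyPumpable_formLanguage_append (hR : R.Finite) (hα : (formLanguage R α).Infinite)
    (hβ : (formLanguage R β).Infinite) : DoublyPumpable (formLanguage R (α ++ β)) := by
  rw [formLanguage_append]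
  exact (pumpable_formLanguage_of_infinite hR hα).mul (pumpable_formLanguage_of_infinite hR hβ)

lemma finite_or_exists_split_finite_of_not_doublyPumpable (hR : R.Finite)
    (hw : w ∈ formLanguage R α) (hdp : ¬ DoublyPumpable (formLanguage R α)) :
    (formLanguage R α).Finite ∨
      ∃ β A γ, α = β ++ .nonterminal A :: γ ∧
        (formLanguage R β).Finite ∧ (formLanguage R γ).Finite := by
  refine or_iff_not_imp_left.mpr fun hinf => ?_
  obtain ⟨β, A, γ, rfl, hA⟩ := exists_infinite_nonterminal hinf
  rw [formLanguage_append_cons] at hw hdp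
  obtain ⟨_, ⟨u, hu, _, -, -⟩, v, hv, -⟩ := hw
  refine ⟨β, A, γ, rfl, ?_, ?_⟩ <;> by_contra hinf
  · refine hdp (DoublyPumpable.of_isContext (isContext_mul_right hv) ?_)
    rw [← formLanguage_append]
    exact doublyPumpable_formLanguage_append hR hinf hA
  · rw [mul_assoc] at hdp
    refine hdp (DoublyPumpable.of_isContext (isContext_mul_left hu) ?_)
    rw [← formLanguage_append]
    exact doublyPumpable_formLanguage_append hR hA hinf

end InfiniteForms

section Linearization

lemma finite_setOf_append_cons_eq {X Y : Type*} {f : Y → X} (hf : f.Injective) (l : List X) :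
    {p : List X × Y × List X | l = p.1 ++ f p.2.1 :: p.2.2}.Finite := by
  refine (l.inits.finite_toSet.prod
    ((l.finite_toSet.preimage hf.injOn).prod l.tails.finite_toSet)).subset ?_
  rintro ⟨a, b, c⟩ rfl
  exact ⟨(List.mem_inits _ _).mpr (List.prefix_append _ _), by simp,
    (List.mem_tails _ _).mpr ((List.suffix_cons _ _).trans (List.suffix_append _ _))⟩

variable {T N : Type} {R : Set (ContextFreeRule T N)} {rs : List (LinearRule T N)} {A S : N}
  {w : List T}

/-- A linear rule obtained from a rule in `R` by replacing every symbol of its body, with the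
exception of at most one nonterminal, by a word it derives. The finiteness conditions keep the set
of linearizations finite. -/
inductive IsLinearization (R : Set (ContextFreeRule T N)) : LinearRule T N → Prop
  | terminal {r : ContextFreeRule T N} (hr : r ∈ R) (hfin : (formLanguage R r.output).Finite)
      {u : List T} (hu : u ∈ formLanguage R r.output) :
      IsLinearization R ⟨r.input, .inl u⟩
  | step {r : ContextFreeRule T N} (hr : r ∈ R) {α β : List (Symbol T N)} {B : N}
      (hsplit : r.output = α ++ .nonterminal B :: β)
      (hα : (formLanguage R α).Finite) (hβ : (formLanguage R β).Finite)
      {u w : List T} (hu : u ∈ formLanguage R α) (hw : w ∈ formLanguage R β) :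
      IsLinearization R ⟨r.input, .inr (u, B, w)⟩

lemma finite_setOf_isLinearization (hR : R.Finite) : {q | IsLinearization R q}.Finite := by
  let splits (r : ContextFreeRule T N) : Set (List (Symbol T N) × N × List (Symbol T N)) :=
    {p | r.output = p.1 ++ .nonterminal p.2.1 :: p.2.2 ∧
      (formLanguage R p.1).Finite ∧ (formLanguage R p.2.2).Finite}
  have splits_finite (r : ContextFreeRule T N) : (splits r).Finite :=
    (finite_setOf_append_cons_eq (fun _ _ => Symbol.nonterminal.inj) r.output).subset
      fun _ hp => hp.1
  have terminal_finite : (⋃ r ∈ {r ∈ R | (formLanguage R r.output).Finite},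
      (fun u => (⟨r.input, .inl u⟩ : LinearRule T N)) '' formLanguage R r.output).Finite :=
    (hR.sep _).biUnion fun r hr => Set.Finite.image _ hr.2
  have step_finite : (⋃ r ∈ R, ⋃ p ∈ splits r,
      Set.image2 (fun u w => (⟨r.input, .inr (u, p.2.1, w)⟩ : LinearRule T N))
        (formLanguage R p.1) (formLanguage R p.2.2)).Finite :=
    hR.biUnion fun r _ => (splits_finite r).biUnion fun p hp => Set.Finite.image2 _ hp.2.1 hp.2.2
  refine (terminal_finite.union step_finite).subset ?_
  rintro _ (⟨hr, hfin, hu⟩ | ⟨hr, hsplit, hα, hβ, hu, hw⟩)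
  · exact .inl (Set.mem_biUnion ⟨hr, hfin⟩ (Set.mem_image_of_mem _ hu))
  · exact .inr (Set.mem_biUnion hr (Set.mem_biUnion (x := (_, _, _)) ⟨hsplit, hα, hβ⟩
      (Set.mem_image2_of_mem hu hw)))

lemma LinDerives.mem_formLanguage (hrs : ∀ q ∈ rs, IsLinearization R q)
    (h : LinDerives rs A w) : w ∈ formLanguage R [.nonterminal A] := by
  induction h with
  | terminal hq =>
    cases hrs _ hq with
    | terminal hr _ hu => exact formLanguage_output_le hr hu
  | step hq _ ih =>
    cases hrs _ hq with
    | step hr hsplit _ _ hu hw =>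
      refine formLanguage_output_le hr ?_
      rw [hsplit, formLanguage_append_cons]
      exact isContext_mul_mul hu hw _ ih

lemma linDerives_of_mem_formLanguage (hR : R.Finite) (hrs : ∀ q, IsLinearization R q → q ∈ rs)
    (hdp : ¬ DoublyPumpable (formLanguage R [.nonterminal S]))
    (hw : w ∈ formLanguage R [.nonterminal S]) : LinDerives rs S w := by
  let P (A : N) : Language T :=
    {w | ¬ DoublyPumpable (formLanguage R [.nonterminal A]) → LinDerives rs A w}
  suffices hmem : w ∈ formLanguage R [] * P S * formLanguage R [] by
    rw [formLanguage_nil, one_mul, mul_one] at hmem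
    exact hmem hdp
  refine Yields.mem_mul_mul_of_closed (fun r hr w hw hsub hdp => ?_) hw rfl
  have hdp_output : ¬ DoublyPumpable (formLanguage R r.output) :=
    fun h => hdp (h.mono (formLanguage_output_le hr))
  rcases finite_or_exists_split_finite_of_not_doublyPumpable hR hw hdp_output with
    hfin | ⟨α, B, β, hsplit, hα, hβ⟩
  · exact .terminal (hrs _ (.terminal hr hfin hw))
  · obtain ⟨_, ⟨u, hu, v, hv, rfl⟩, u', hu', rfl⟩ := hsub α B β hsplit
    refine .step (hrs _ (.step hr hsplit hα hβ hu hu')) (hv fun hB => hdp_output ?_)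
    rw [hsplit, formLanguage_append_cons]
    exact hB.of_isContext (isContext_mul_mul hu hu')

theorem isLinearLang_of_not_doublyPumpable (hR : R.Finite)
    (hdp : ¬ DoublyPumpable (formLanguage R [.nonterminal S])) :
    IsLinearLang (formLanguage R [.nonterminal S]) := by
  let rs : List (LinearRule T N) := (finite_setOf_isLinearization hR).toFinset.toList
  have mem_rs (q : LinearRule T N) : q ∈ rs ↔ IsLinearization R q := by simp [rs]
  exact ⟨⟨N, S, rs⟩, fun w _ =>
    ⟨linDerives_of_mem_formLanguage hR (fun q => (mem_rs q).mpr) hdp,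
      LinDerives.mem_formLanguage fun q => (mem_rs q).mp⟩⟩

end Linearization

/-- **Pumping lemma for non-linear context-free languages** (Lemma 4).  If `L`
is context-free but not linear, then there are infinitely many words `p ∈ L`
admitting a factorization `p = r s t u v w x y z` with
`r sⁱ t uⁱ v wʲ x yʲ z ∈ L` for all `i, j ≥ 0`, `s u` nonempty and
`w y` nonempty. -/
theorem pumping_nonlinear_cf {T : Type} (L : Language T)
    (hcf : L.IsContextFree) (hnl : ¬ IsLinearLang L) :
    {p | p ∈ L ∧ ∃ r s t u v w x y z : List T,
      p = r ++ s ++ t ++ u ++ v ++ w ++ x ++ y ++ z ∧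
      (∀ i j : ℕ, r ++ wordPow s i ++ t ++ wordPow u i ++ v ++
        wordPow w j ++ x ++ wordPow y j ++ z ∈ L) ∧
      s ++ u ≠ [] ∧ w ++ y ≠ []}.Infinite := by
  obtain ⟨g, rfl⟩ := hcf
  have hdp : DoublyPumpable g.language := by
    by_contra hdp
    rw [language_eq_formLanguage] at hdp hnl
    exact hnl (isLinearLang_of_not_doublyPumpable g.rules.finite_toSet hdp)
  exact hdp.infinite
end

section
/- Let L be a linear language. Then there exists an integer n such that every word p ∈ L with |p| ≥ n admits a factorization p = u v w x y satisfying: (1) u v^i w x^i y ∈ L for all i ∈ ℕ; (2) v x is nonempty; (3) |u v x y| ≤ n. -/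
lemma wordPow_succ' {T : Type} (v : List T) (i : ℕ) : wordPow v (i + 1) = wordPow v i ++ v := by
  induction i with
  | zero => simp [wordPow]
  | succ i ih =>
    calc wordPow v (i + 1 + 1) = v ++ wordPow v (i + 1) := rfl
      _ = v ++ (wordPow v i ++ v) := by rw [ih]
      _ = wordPow v (i + 1) ++ v := (List.append_assoc _ _ _).symm

/-- The number of terminal letters on the right-hand side of a production. -/
def LinearRule.weight {T N : Type} (r : LinearRule T N) : ℕ :=
  match r.output with
  | Sum.inl u => u.length
  | Sum.inr (u, _, w) => u.length + w.length

/-- Derivability of sentential forms: `LinReaches rs A l B r` says that `A ⇒* l B r` by the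
productions in `rs`. -/
inductive LinReaches {T N : Type} (rs : List (LinearRule T N)) :
    N → List T → N → List T → Prop
  | refl (A : N) : LinReaches rs A [] A []
  | step {A B C : N} {u l r w : List T}
      (hr : (⟨A, Sum.inr (u, B, w)⟩ : LinearRule T N) ∈ rs)
      (h : LinReaches rs B l C r) :
      LinReaches rs A (u ++ l) C (r ++ w)

/-- The word `p` has a derivation `A ⇒* u C y ⇒* u v C x y ⇒* u v w x y` whose loop at `C` produces
a nonempty `v x` and in which the factors around `w` have at most `n` letters altogether. -/
def LinPumpable {T N : Type} (rs : List (LinearRule T N)) (n : ℕ) (A : N) (p : List T) : Prop :=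
  ∃ (C : N) (u v w x y : List T), p = u ++ v ++ w ++ x ++ y ∧
    LinReaches rs A u C y ∧ LinReaches rs C v C x ∧ LinDerives rs C w ∧
    v ++ x ≠ [] ∧ u.length + v.length + x.length + y.length ≤ n

/-- The word `p` has a derivation `A ⇒* l C r ⇒* l q r` that reaches a nonterminal `C` outside `F`
after producing at most `n` letters. -/
def LinLeaves {T N : Type} (rs : List (LinearRule T N)) (F : Finset N) (n : ℕ) (A : N)
    (p : List T) : Prop :=
  ∃ C ∉ F, ∃ l q r : List T, p = l ++ q ++ r ∧
    LinReaches rs A l C r ∧ LinDerives rs C q ∧ l.length + r.length ≤ n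

section

variable {T N : Type} {rs : List (LinearRule T N)} {A B C : N} {u w p : List T} {F : Finset N}
  {m n M : ℕ}

namespace LinReaches

lemma trans {l₁ l₂ r₁ r₂ : List T} (h₁ : LinReaches rs A l₁ B r₁)
    (h₂ : LinReaches rs B l₂ C r₂) : LinReaches rs A (l₁ ++ l₂) C (r₂ ++ r₁) := by
  induction h₁ with
  | refl => simpa using h₂
  | step hr _ ih => simpa using step hr (ih h₂)

lemma linDerives {l q r : List T} (h : LinReaches rs A l B r) (hq : LinDerives rs B q) :
    LinDerives rs A (l ++ q ++ r) := by
  induction h with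
  | refl => simpa using hq
  | step hr _ ih => simpa using LinDerives.step hr (ih hq)

lemma iterate {v x : List T} (h : LinReaches rs A v A x) (i : ℕ) :
    LinReaches rs A (wordPow v i) A (wordPow x i) := by
  induction i with
  | zero => exact refl A
  | succ i ih =>
    rw [wordPow_succ' x]
    exact h.trans ih

end LinReaches

namespace LinPumpable

lemma mono (hmn : m ≤ n) (h : LinPumpable rs m A p) : LinPumpable rs n A p := by
  obtain ⟨C, u, v, w, x, y, hp, hreach, hloop, hw, hvx, hlen⟩ := h
  exact ⟨C, u, v, w, x, y, hp, hreach, hloop, hw, hvx, hlen.trans hmn⟩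

lemma step (hr : (⟨A, Sum.inr (u, B, w)⟩ : LinearRule T N) ∈ rs)
    (huw : u.length + w.length ≤ m) (h : LinPumpable rs n B p) :
    LinPumpable rs (n + m) A (u ++ p ++ w) := by
  obtain ⟨C, u', v, w', x, y, rfl, hreach, hloop, hw', hvx, hlen⟩ := h
  refine ⟨C, u ++ u', v, w', x, y ++ w, by simp, hreach.step hr, hloop, hw', hvx, ?_⟩
  simp only [List.length_append]
  omega

lemma exists_factorization (h : LinPumpable rs n A p) :
    ∃ u v w x y : List T, p = u ++ v ++ w ++ x ++ y ∧
      (∀ i : ℕ, LinDerives rs A (u ++ wordPow v i ++ w ++ wordPow x i ++ y)) ∧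
      v ++ x ≠ [] ∧ u.length + v.length + x.length + y.length ≤ n := by
  obtain ⟨C, u, v, w, x, y, hp, hreach, hloop, hw, hvx, hlen⟩ := h
  refine ⟨u, v, w, x, y, hp, fun i => ?_, hvx, hlen⟩
  simpa using hreach.linDerives ((hloop.iterate i).linDerives hw)

end LinPumpable

namespace LinLeaves

lemma step (hr : (⟨A, Sum.inr (u, B, w)⟩ : LinearRule T N) ∈ rs)
    (huw : u.length + w.length ≤ m) (h : LinLeaves rs F n B p) :
    LinLeaves rs F (n + m) A (u ++ p ++ w) := by
  obtain ⟨C, hC, l, q, r, rfl, hreach, hq, hlen⟩ := h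
  refine ⟨C, hC, u ++ l, q, r ++ w, by simp, hreach.step hr, hq, ?_⟩
  simp only [List.length_append]
  omega

lemma step_erase [DecidableEq N] (hr : (⟨A, Sum.inr (u, B, w)⟩ : LinearRule T N) ∈ rs)
    (huw : u.length + w.length ≤ m) (hne : u ++ w ≠ []) (h : LinLeaves rs (F.erase A) n B p) :
    LinPumpable rs (n + m) A (u ++ p ++ w) ∨ LinLeaves rs F (n + m) A (u ++ p ++ w) := by
  obtain ⟨C, hC, l, q, r, hp, hreach, hq, hlen⟩ := h
  obtain rfl | hCA := eq_or_ne C A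
  · left
    refine ⟨C, [], u ++ l, q, r ++ w, [], by simp [hp], .refl C, hreach.step hr, hq, ?_, ?_⟩
    · simp only [ne_eq, List.append_eq_nil_iff] at hne ⊢
      tauto
    · simp only [List.length_append, List.length_nil]
      omega
  · have hCF : C ∉ F := fun hF => hC (Finset.mem_erase.mpr ⟨hCA, hF⟩)
    exact .inr (step hr huw ⟨C, hCF, l, q, r, hp, hreach, hq, hlen⟩)

end LinLeaves

namespace LinDerives

lemma mem_of_forall_input_mem (hF : ∀ r ∈ rs, r.input ∈ F) (h : LinDerives rs A p) : A ∈ F := by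
  cases h with
  | terminal hr => exact hF _ hr
  | step hr _ => exact hF _ hr

lemma short_or_linPumpable_or_linLeaves (hM : ∀ r ∈ rs, r.weight ≤ M) (h : LinDerives rs A p)
    (F : Finset N) :
    p.length ≤ M * F.card + M ∨ LinPumpable rs (M * F.card) A p ∨
      LinLeaves rs F (M * F.card) A p := by
  classical
  induction h generalizing F with
  | terminal hr => exact .inl (le_add_left (hM _ hr))
  | @step A B u w p hr hp ih =>
    by_cases hA : A ∈ F
    · by_cases huw : u ++ w = []
      · have hunit : u.length + w.length ≤ 0 := by simp [← List.length_append, huw]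
        refine (ih F).imp (fun hshort => ?_) (.imp (.step hr hunit) (.step hr hunit))
        simp only [List.length_append]
        omega
      · have hweight : u.length + w.length ≤ M := hM _ hr
        have hcard : M * (F.erase A).card + M = M * F.card := by
          rw [← Finset.card_erase_add_one hA, Nat.mul_succ]
        rw [← hcard]
        obtain hshort | hpump | hleaves := ih (F.erase A)
        · left
          simp only [List.length_append]
          omega
        · exact .inr (.inl (hpump.step hr hweight))
        · exact .inr (hleaves.step_erase hr hweight huw)
    · exact .inr (.inr ⟨A, hA, [], _, [], by simp, .refl A, .step hr hp, by simp⟩)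

lemma linPumpable_of_length_lt (hM : ∀ r ∈ rs, r.weight ≤ M) (hF : ∀ r ∈ rs, r.input ∈ F)
    (h : LinDerives rs A p) (hlen : M * F.card + M < p.length) :
    LinPumpable rs (M * F.card) A p := by
  obtain hshort | hpump | ⟨C, hC, _, _, _, _, _, hq, _⟩ := h.short_or_linPumpable_or_linLeaves hM F
  · exact absurd hshort hlen.not_ge
  · exact hpump
  · exact absurd (hq.mem_of_forall_input_mem hF) hC

lemma exists_forall_linPumpable (rs : List (LinearRule T N)) :
    ∃ n : ℕ, ∀ (A : N) (p : List T), LinDerives rs A p → n < p.length →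
      LinPumpable rs n A p := by
  classical
  let M : ℕ := (rs.map LinearRule.weight).sum
  let F : Finset N := (rs.map LinearRule.input).toFinset
  have hM : ∀ r ∈ rs, r.weight ≤ M := fun r hr => List.le_sum_of_mem (List.mem_map_of_mem hr)
  have hF : ∀ r ∈ rs, r.input ∈ F := fun r hr => List.mem_toFinset.mpr (List.mem_map_of_mem hr)
  exact ⟨M * F.card + M, fun A p h hlen =>
    (h.linPumpable_of_length_lt hM hF hlen).mono (Nat.le_add_right _ _)⟩

end LinDerives

end

/-- **Pumping lemma for linear languages** (Lemma 3).  If `L` is linear, then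
there is `n` such that every `p ∈ L` with `|p| ≥ n` factors as `p = u v w x y`
with `u vⁱ w xⁱ y ∈ L` for all `i`, `v x` nonempty, and `|u v x y| ≤ n`. -/
theorem linear_pumping {T : Type} (L : Set (List T)) (hL : IsLinearLang L) :
    ∃ n : ℕ, ∀ p ∈ L, n ≤ p.length →
      ∃ u v w x y : List T, p = u ++ v ++ w ++ x ++ y ∧
        (∀ i : ℕ, u ++ wordPow v i ++ w ++ wordPow x i ++ y ∈ L) ∧
        v ++ x ≠ [] ∧
        u.length + v.length + x.length + y.length ≤ n := by
  obtain ⟨G, hG⟩ := hL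
  obtain ⟨n, hn⟩ := LinDerives.exists_forall_linPumpable G.rules
  refine ⟨n + 1, fun p hpL hlen => ?_⟩
  have hp : LinDerives G.rules G.start p :=
    (hG p (List.ne_nil_of_length_pos (Nat.zero_lt_of_lt hlen))).mp hpL
  obtain ⟨u, v, w, x, y, rfl, hpump, hvx, houter⟩ := (hn _ p hp hlen).exists_factorization
  have hw : w ≠ [] := by
    rintro rfl
    simp only [List.length_append, List.length_nil] at hlen
    omega
  exact ⟨u, v, w, x, y, rfl, fun i => (hG _ (by simp [hw])).mpr (hpump i), hvx, by omega⟩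
end

section
/- The language L = { a^i b^i c^j d^j : i, j ∈ ℕ } over the four-letter alphabet {a, b, c, d} is not linear. -/
/-- The language `{aⁱ bⁱ cʲ dʲ : i, j ∈ ℕ}` (Example 4).  Here the four-letter
alphabet `{a, b, c, d}` is `Fin 4` with `a = 0`, `b = 1`, `c = 2`, `d = 3`. -/
def abcdLang : Set (List (Fin 4)) :=
  {p | ∃ i j : ℕ, p = List.replicate i 0 ++ List.replicate i 1 ++
    List.replicate j 2 ++ List.replicate j 3}

/-!
The idea is a pumping lemma for linear grammars in which the pumped pair lies near the two *ends*
of the word. A derivation of a long word passes through sentential forms `x B y` whose outer part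
grows by a bounded positive amount at a time, ignoring steps that produce no terminals; after as
many growth steps as there are nonterminals some `B` has recurred, giving `A ⇒* x B y` and
`B ⇒* u B v` with `uv` nonempty and `|xuvy|` bounded. In `aⁱ bⁱ cʲ dʲ` with `i` and `j` large this
forces `u` to be a power of `a` and `v` a power of `d`, so deleting `u` and `v` unbalances the `a`s
with the `b`s or the `c`s with the `d`s.
-/

section Pumping

variable {T N : Type} {rs : List (LinearRule T N)} {A B C : N} {M : ℕ}

/-- `LinDerivesForm rs A x B y` : the productions in `rs` rewrite `A` to the sentential form
`x B y` in zero or more steps. -/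
inductive LinDerivesForm (rs : List (LinearRule T N)) : N → List T → N → List T → Prop
  | refl (A : N) : LinDerivesForm rs A [] A []
  | step {A B C : N} {u w x y : List T}
      (hr : (⟨A, Sum.inr (u, B, w)⟩ : LinearRule T N) ∈ rs)
      (h : LinDerivesForm rs B x C y) :
      LinDerivesForm rs A (u ++ x) C (y ++ w)

theorem LinDerivesForm.trans {x y u v : List T} (hAB : LinDerivesForm rs A x B y)
    (hBC : LinDerivesForm rs B u C v) : LinDerivesForm rs A (x ++ u) C (v ++ y) := by
  induction hAB with
  | refl => simpa using hBC
  | step hr _ ih => simpa using LinDerivesForm.step hr (ih hBC)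

theorem LinDerivesForm.linDerives {x y q : List T} (hAB : LinDerivesForm rs A x B y)
    (hB : LinDerives rs B q) : LinDerives rs A (x ++ q ++ y) := by
  induction hAB with
  | refl => simpa using hB
  | step hr _ ih => simpa using LinDerives.step hr (ih hB)

theorem wordPow_append_self (v : List T) (n : ℕ) : wordPow v n ++ v = v ++ wordPow v n := by
  induction n with
  | zero => simp [wordPow]
  | succ n ih => rw [wordPow, List.append_assoc, ih]

theorem LinDerivesForm.wordPow {u v : List T} (h : LinDerivesForm rs A u A v) (i : ℕ) :
    LinDerivesForm rs A (wordPow u i) A (wordPow v i) := by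
  induction i with
  | zero => exact .refl A
  | succ i ih =>
    rw [_root_.wordPow, _root_.wordPow, ← wordPow_append_self v]
    exact h.trans ih

/-- A derivation of the word `p` from `A` that passes through the sentential form `x B y` and
goes on to derive `q` from `B`. -/
structure LinDerivesThrough (rs : List (LinearRule T N)) (A : N) (p x : List T) (B : N)
    (q y : List T) : Prop where
  eq_append : p = x ++ q ++ y
  form : LinDerivesForm rs A x B y
  linDerives : LinDerives rs B q

theorem LinDerivesThrough.refl {p : List T} (h : LinDerives rs A p) :
    LinDerivesThrough rs A p [] A p [] :=
  ⟨by simp, .refl A, h⟩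

theorem LinDerivesThrough.trans {p q r x y u v : List T} (hAB : LinDerivesThrough rs A p x B q y)
    (hBC : LinDerivesThrough rs B q u C r v) :
    LinDerivesThrough rs A p (x ++ u) C r (v ++ y) :=
  ⟨by simp [hAB.eq_append, hBC.eq_append], hAB.form.trans hBC.form, hBC.linDerives⟩

/-- The number of terminals on the right-hand side of a production. -/
def LinearRule.width (r : LinearRule T N) : ℕ :=
  Sum.elim List.length (fun t => t.1.length + t.2.2.length) r.output

theorem exists_forall_width_le (rs : List (LinearRule T N)) : ∃ M, ∀ r ∈ rs, r.width ≤ M :=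
  ⟨(rs.map LinearRule.width).sum, fun _ hr => List.le_sum_of_mem (List.mem_map_of_mem hr)⟩

theorem LinDerives.mem_map_input {p : List T} (h : LinDerives rs A p) :
    A ∈ rs.map LinearRule.input := by
  cases h with
  | terminal hr => exact List.mem_map_of_mem hr
  | step hr _ => exact List.mem_map_of_mem hr

theorem LinDerives.exists_through_length_pos_le {p : List T} (h : LinDerives rs A p)
    (hM : ∀ r ∈ rs, r.width ≤ M) (hp : M < p.length) :
    ∃ x B q y, LinDerivesThrough rs A p x B q y ∧
      0 < x.length + y.length ∧ x.length + y.length ≤ M := by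
  induction h with
  | terminal hr => exact absurd hp (hM _ hr).not_gt
  | @step A B u w p hr hB ih =>
    have hstep : LinDerivesThrough rs A (u ++ p ++ w) u B p w :=
      ⟨rfl, by simpa using LinDerivesForm.step hr (.refl B), hB⟩
    rcases Nat.eq_zero_or_pos (u.length + w.length) with hzero | hpos
    · obtain ⟨rfl, rfl⟩ : u = [] ∧ w = [] := by simpa using hzero
      obtain ⟨x, C, q, y, hC, hbounds⟩ := ih (by simpa using hp)
      exact ⟨x, C, q, y, by simpa using hstep.trans hC, hbounds⟩
    · exact ⟨u, B, p, w, hstep, hpos, hM _ hr⟩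

/-- `S` plays the role of the set of nonterminals not yet visited: once `A` is erased from it, a
form that leaves `S.erase A` either leaves `S` or returns to `A`, and the latter closes a loop. -/
theorem LinDerives.exists_through_notMem_or_loop (hM : ∀ r ∈ rs, r.width ≤ M) (S : Finset N)
    {p : List T} (h : LinDerives rs A p) (hp : M * S.card < p.length) :
    (∃ x B q y, LinDerivesThrough rs A p x B q y ∧ B ∉ S ∧
      x.length + y.length ≤ M * S.card) ∨
    ∃ x B q y u r v, LinDerivesThrough rs A p x B q y ∧ LinDerivesThrough rs B q u B r v ∧
      0 < u.length + v.length ∧ x.length + u.length + v.length + y.length ≤ M * S.card := by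
  classical
  induction S using Finset.strongInduction generalizing A p with
  | H S ih =>
    by_cases hA : A ∈ S
    swap
    · exact .inl ⟨[], A, p, [], .refl h, hA, by simp⟩
    have hcard : M * S.card = M * (S.erase A).card + M := by
      rw [← Finset.card_erase_add_one hA, Nat.mul_succ]
    rw [hcard] at hp ⊢
    obtain ⟨x, B, q, y, hB, hpos, hle⟩ := h.exists_through_length_pos_le hM (by omega)
    have hlength : p.length = x.length + q.length + y.length := by
      simp only [hB.eq_append, List.length_append]
    rcases ih (S.erase A) (Finset.erase_ssubset hA) hB.linDerives (by omega) with
      ⟨x', C, r, y', hC, hCS, hle'⟩ | ⟨x', C, r, y', u, s, v, hC, hloop, hpos', hle'⟩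
    · by_cases hCA : C = A
      · subst hCA
        exact .inr ⟨[], C, p, [], x ++ x', r, y' ++ y, .refl h, hB.trans hC,
          by simp only [List.length_append]; omega,
          by simp only [List.length_append, List.length_nil]; omega⟩
      · exact .inl ⟨x ++ x', C, r, y' ++ y, hB.trans hC,
          fun hS => hCS (Finset.mem_erase.mpr ⟨hCA, hS⟩),
          by simp only [List.length_append]; omega⟩
    · exact .inr ⟨x ++ x', C, r, y' ++ y, u, s, v, hB.trans hC, hloop, hpos',
        by simp only [List.length_append]; omega⟩

theorem LinDerives.exists_loop_of_length_lt [DecidableEq N] (hM : ∀ r ∈ rs, r.width ≤ M)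
    {p : List T} (h : LinDerives rs A p)
    (hp : M * (rs.map LinearRule.input).toFinset.card < p.length) :
    ∃ x B q y u r v, LinDerivesThrough rs A p x B q y ∧ LinDerivesThrough rs B q u B r v ∧
      0 < u.length + v.length ∧ x.length + u.length + v.length + y.length ≤
        M * (rs.map LinearRule.input).toFinset.card :=
  (h.exists_through_notMem_or_loop hM _ hp).resolve_left
    fun ⟨_, _, _, _, hB, hnot, _⟩ => hnot (List.mem_toFinset.mpr hB.linDerives.mem_map_input)

theorem LinearGrammar.exists_pumping (G : LinearGrammar T) :
    ∃ n, ∀ p ∈ G.language, n < p.length → ∃ x u q v y, p = x ++ u ++ q ++ v ++ y ∧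
      0 < u.length + v.length ∧ x.length + u.length + v.length + y.length ≤ n ∧
      ∀ i, x ++ wordPow u i ++ q ++ wordPow v i ++ y ∈ G.language := by
  classical
  obtain ⟨M, hM⟩ := exists_forall_width_le G.rules
  refine ⟨M * (G.rules.map LinearRule.input).toFinset.card, fun p hp hlt => ?_⟩
  obtain ⟨x, B, _, y, u, q, v, hB, hloop, hpos, hle⟩ :=
    LinDerives.exists_loop_of_length_lt hM hp hlt
  refine ⟨x, u, q, v, y, by simp [hB.eq_append, hloop.eq_append], hpos, hle, fun i => ?_⟩
  simpa [LinearGrammar.language] using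
    (hB.form.trans (hloop.form.wordPow i)).linDerives hloop.linDerives

theorem IsLinearLang.exists_pumping {L : Set (List T)} (hL : IsLinearLang L) :
    ∃ n, ∀ p ∈ L, n < p.length → ∃ x u q v y, p = x ++ u ++ q ++ v ++ y ∧
      0 < u.length + v.length ∧ x.length + u.length + v.length + y.length ≤ n ∧
      ∀ i, x ++ wordPow u i ++ q ++ wordPow v i ++ y ≠ [] →
        x ++ wordPow u i ++ q ++ wordPow v i ++ y ∈ L := by
  obtain ⟨G, hG⟩ := hL
  obtain ⟨n, hn⟩ := G.exists_pumping
  refine ⟨n, fun p hp hlt => ?_⟩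
  have hp_ne : p ≠ [] := List.ne_nil_of_length_pos (by omega)
  obtain ⟨x, u, q, v, y, hfactor, hpos, hle, hpump⟩ := hn p ((hG p hp_ne).mp hp) hlt
  exact ⟨x, u, q, v, y, hfactor, hpos, hle, fun i hne => (hG _ hne).mpr (hpump i)⟩

end Pumping

section Words

variable {α : Type*} {a : α} {n : ℕ} {l s : List α}

theorem forall_mem_eq_of_prefix_replicate_append (h : s <+: List.replicate n a ++ l)
    (hs : s.length ≤ n) : ∀ b ∈ s, b = a := fun _ hb =>
  have hprefix : s <+: List.replicate n a :=
    List.prefix_of_prefix_length_le h (List.prefix_append ..) (by simpa using hs)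
  List.eq_of_mem_replicate (hprefix.subset hb)

theorem forall_mem_eq_of_suffix_append_replicate (h : s <:+ l ++ List.replicate n a)
    (hs : s.length ≤ n) : ∀ b ∈ s, b = a := fun _ hb =>
  have hsuffix : s <:+ List.replicate n a :=
    List.suffix_of_suffix_length_le h (List.suffix_append ..) (by simpa using hs)
  List.eq_of_mem_replicate (hsuffix.subset hb)

end Words

/-- The word `aⁱ bⁱ cʲ dʲ`. -/
def abcdWord (i j : ℕ) : List (Fin 4) :=
  List.replicate i 0 ++ List.replicate i 1 ++ List.replicate j 2 ++ List.replicate j 3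

theorem length_abcdWord (i j : ℕ) : (abcdWord i j).length = 2 * i + 2 * j := by
  simp only [abcdWord, List.length_append, List.length_replicate]
  omega

theorem abcdWord_mem_abcdLang (i j : ℕ) : abcdWord i j ∈ abcdLang :=
  ⟨i, j, rfl⟩

theorem count_eq_count_of_mem_abcdLang {p : List (Fin 4)} (h : p ∈ abcdLang) :
    p.count 0 = p.count 1 ∧ p.count 2 = p.count 3 := by
  obtain ⟨i, j, rfl⟩ := h
  simp [List.count_replicate]

section Factor

variable {i j : ℕ} {x u q v y : List (Fin 4)}

theorem eq_replicate_zero_of_abcdWord_eq_append (h : abcdWord i j = x ++ u ++ q ++ v ++ y)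
    (hxu : x.length + u.length ≤ i) : u = List.replicate u.length 0 := by
  have hprefix : x ++ u <+: List.replicate i 0 ++
      (List.replicate i 1 ++ List.replicate j 2 ++ List.replicate j 3) :=
    ⟨q ++ v ++ y, by simpa [abcdWord] using h.symm⟩
  exact List.eq_replicate_of_mem fun b hb =>
    forall_mem_eq_of_prefix_replicate_append hprefix (by simpa using hxu) b
      (List.mem_append_right x hb)

theorem eq_replicate_three_of_abcdWord_eq_append (h : abcdWord i j = x ++ u ++ q ++ v ++ y)
    (hvy : v.length + y.length ≤ j) : v = List.replicate v.length 3 := by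
  have hsuffix : v ++ y <:+ abcdWord i j := ⟨x ++ u ++ q, by simpa using h.symm⟩
  exact List.eq_replicate_of_mem fun b hb =>
    forall_mem_eq_of_suffix_append_replicate hsuffix (by simpa using hvy) b
      (List.mem_append_left y hb)

theorem notMem_abcdLang_of_abcdWord_eq_append (h : abcdWord i j = x ++ u ++ q ++ v ++ y)
    (hxu : x.length + u.length ≤ i) (hvy : v.length + y.length ≤ j)
    (hpos : 0 < u.length + v.length) : x ++ q ++ y ∉ abcdLang := by
  intro hmem
  obtain ⟨hab, hcd⟩ := count_eq_count_of_mem_abcdLang hmem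
  obtain ⟨hab', hcd'⟩ := count_eq_count_of_mem_abcdLang (h ▸ abcdWord_mem_abcdLang i j)
  rw [eq_replicate_zero_of_abcdWord_eq_append h hxu,
    eq_replicate_three_of_abcdWord_eq_append h hvy] at hab' hcd'
  simp only [List.count_append, List.count_replicate_self, List.count_replicate, Fin.isValue,
    Fin.reduceBEq, Bool.false_eq_true, ↓reduceIte] at hab hcd hab' hcd'
  omega

end Factor

/-- The language `{aⁱ bⁱ cʲ dʲ : i, j ∈ ℕ}` is not linear (Example 4). -/
theorem abcdLang_not_linear : ¬ IsLinearLang abcdLang := by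
  intro hlinear
  obtain ⟨n, hpump⟩ := hlinear.exists_pumping
  have hlength := length_abcdWord (n + 1) (n + 1)
  obtain ⟨x, u, q, v, y, hfactor, hpos, hle, hmem⟩ :=
    hpump (abcdWord (n + 1) (n + 1)) (abcdWord_mem_abcdLang _ _) (by omega)
  have hne : x ++ q ++ y ≠ [] := by
    apply List.ne_nil_of_length_pos
    simp only [hfactor, List.length_append] at hlength ⊢
    omega
  have hnot : x ++ q ++ y ∉ abcdLang :=
    notMem_abcdLang_of_abcdWord_eq_append hfactor (by omega) (by omega) hpos
  exact hnot (by simpa [wordPow] using hmem 0 (by simpa [wordPow] using hne))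
end

section
/- The Dyck language of correct bracket expressions over the alphabet {(, )} (the set of balanced bracket sequences) is not k-rated linear for any nonnegative rational k; in particular, it is not fix-rated linear. -/
/-- The Dyck language of balanced bracket expressions over `{(, )}` (Example 8):
here the alphabet is `Fin 2` with `( = 0` and `) = 1`; a word is in the language
iff every prefix has at least as many `(`s as `)`s and the whole word has equally
many `(`s and `)`s. -/
def dyckLang : Set (List (Fin 2)) :=
  {p | (∀ q : List (Fin 2), q <+: p → q.count 1 ≤ q.count 0) ∧ p.count 0 = p.count 1}

lemma exists_eq_append_of_append_eq_append {α : Type*} {l₁ c l₂ x z y : List α}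
    (h : l₁ ++ c ++ l₂ = x ++ z ++ y) (hx : x.length ≤ l₁.length) (hy : y.length ≤ l₂.length) :
    ∃ a b, l₁ = x ++ a ∧ l₂ = b ++ y ∧ z = a ++ c ++ b := by
  obtain ⟨a, rfl⟩ : x <+: l₁ :=
    List.prefix_of_prefix_length_le (l₃ := l₁ ++ c ++ l₂)
      ⟨z ++ y, by rw [h, List.append_assoc]⟩ ⟨c ++ l₂, by rw [List.append_assoc]⟩ hx
  obtain ⟨b, rfl⟩ : y <:+ l₂ :=
    List.suffix_of_suffix_length_le ⟨x ++ z, h.symm⟩ ⟨x ++ a ++ c, rfl⟩ hy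
  have hmiddle : x ++ z ++ y = x ++ (a ++ c ++ b) ++ y := by
    simpa only [List.append_assoc] using h.symm
  exact ⟨a, b, rfl, rfl, List.append_cancel_left (List.append_cancel_right hmiddle)⟩

section Derivations

variable {T N : Type} {rs : List (LinearRule T N)} {A B : N} {x y z p : List T}

/-- `LinDerivesForm rs A x B y`: the productions in `rs` derive the sentential form `x B y`
from `A`. It records the context `x _ y` in which words derived from `B` may be exchanged. -/
inductive LinDerivesForm_s10 (rs : List (LinearRule T N)) : N → List T → N → List T → Prop
  | refl (A : N) : LinDerivesForm_s10 rs A [] A []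
  | step {A B D : N} {u w x y : List T}
      (hr : (⟨A, Sum.inr (u, B, w)⟩ : LinearRule T N) ∈ rs)
      (h : LinDerivesForm_s10 rs B x D y) :
      LinDerivesForm_s10 rs A (u ++ x) D (y ++ w)

/-- The number of terminals on the right-hand side of a production, which bounds the growth of a
sentential form in one derivation step. -/
def LinearRule.size (r : LinearRule T N) : ℕ :=
  Sum.elim (fun u => u.length) (fun q => q.1.length + q.2.2.length) r.output

lemma LinDerivesForm_s10.linDerives (h : LinDerivesForm_s10 rs A x B y) (hz : LinDerives rs B z) :
    LinDerives rs A (x ++ z ++ y) := by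
  induction h with
  | refl A => simpa using hz
  | step hr _ ih => simpa using LinDerives.step hr (ih hz)

lemma LinDerives.exists_rule (hp : LinDerives rs A p) : ∃ r ∈ rs, r.input = A := by
  cases hp with
  | terminal hr => exact ⟨_, hr, rfl⟩
  | step hr _ => exact ⟨_, hr, rfl⟩

lemma LinDerives.exists_form_of_add_lt_length {C t : ℕ} (hC : ∀ r ∈ rs, r.size ≤ C)
    (hp : LinDerives rs A p) (ht : t + C < p.length) :
    ∃ x B z y, p = x ++ z ++ y ∧ LinDerivesForm_s10 rs A x B y ∧ LinDerives rs B z ∧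
      t ≤ x.length + y.length ∧ x.length + y.length ≤ t + C := by
  induction hp generalizing t with
  | @terminal A u hr =>
    have hu : u.length ≤ C := hC _ hr
    omega
  | @step A B u w p hr hp ih =>
    have huw : u.length + w.length ≤ C := hC _ hr
    by_cases hle : t ≤ u.length + w.length
    · exact ⟨u, B, p, w, rfl, by simpa using LinDerivesForm_s10.step hr (.refl B), hp, hle, by omega⟩
    · simp only [List.length_append] at ht
      obtain ⟨x, D, z, y, rfl, hD, hz, hlower, hupper⟩ :=
        ih (t := t - (u.length + w.length)) (by omega)
      refine ⟨u ++ x, D, z, y ++ w, by simp, .step hr hD, hz, ?_, ?_⟩ <;>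
      · simp only [List.length_append]
        omega

lemma exists_bound_exists_form_length_le (rs : List (LinearRule T N)) (A : N) :
    ∃ K, ∀ x B y z, LinDerivesForm_s10 rs A x B y → LinDerives rs B z →
      ∃ x' y', LinDerivesForm_s10 rs A x' B y' ∧ x'.length + y'.length ≤ K := by
  let formLengths (B : N) : Set ℕ :=
    {n | ∃ x y, LinDerivesForm_s10 rs A x B y ∧ x.length + y.length = n}
  obtain ⟨K, hK⟩ := (rs.finite_toSet.image fun r => sInf (formLengths r.input)).bddAbove
  refine ⟨K, fun x B y z hB hz => ?_⟩
  -- `N` may be infinite, but `B` derives a word, so it is the input of one of finitely many rules.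
  obtain ⟨r, hr, rfl⟩ := hz.exists_rule
  obtain ⟨x', y', hform, hlen⟩ : sInf (formLengths r.input) ∈ formLengths r.input :=
    Nat.sInf_mem ⟨_, x, y, hB, rfl⟩
  exact ⟨x', y', hform, hlen.trans_le (hK ⟨r, hr, rfl⟩)⟩

end Derivations

theorem IsLinearLang.exists_shrink {T : Type} {L : Set (List T)} (hL : IsLinearLang L) :
    ∃ n, ∀ p ∈ L, n < p.length →
      ∃ x z y x' y', p = x ++ z ++ y ∧ x.length + y.length ≤ n ∧
        x'.length + y'.length < x.length + y.length ∧ x' ++ z ++ y' ∈ L := by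
  obtain ⟨G, hG⟩ := hL
  obtain ⟨K, hK⟩ := exists_bound_exists_form_length_le G.rules G.start
  obtain ⟨C, hC⟩ := (G.rules.finite_toSet.image LinearRule.size).bddAbove
  refine ⟨K + 1 + C, fun p hp hlen => ?_⟩
  have hder : LinDerives G.rules G.start p :=
    (hG p (List.ne_nil_of_length_pos (by omega))).1 hp
  obtain ⟨x, B, z, y, rfl, hB, hz, hlower, hupper⟩ := hder.exists_form_of_add_lt_length
    (fun r hr => hC ⟨r, hr, rfl⟩) hlen
  obtain ⟨x', y', hB', hshort⟩ := hK x B y z hB hz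
  refine ⟨x, z, y, x', y', rfl, hupper, by omega, (hG _ ?_).2 (hB'.linDerives hz)⟩
  simp only [List.length_append] at hlen
  refine List.ne_nil_of_length_pos ?_
  simp only [List.length_append]
  omega

lemma IsRatedLinearLang.isLinearLang {T : Type} {g h : ℕ} {L : Set (List T)}
    (hL : IsRatedLinearLang g h L) : IsLinearLang L :=
  hL.imp fun _ hG => hG.2

section Dyck

variable {m : ℕ} {p q u v : List (Fin 2)}

lemma append_mem_dyckLang (hp : p ∈ dyckLang) (hq : q ∈ dyckLang) : p ++ q ∈ dyckLang := by
  refine ⟨fun s hs => ?_, by simp only [List.count_append, hp.2, hq.2]⟩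
  rw [List.prefix_iff_eq_take.1 hs, List.take_append, List.count_append, List.count_append]
  exact add_le_add (hp.1 _ (List.take_prefix _ _)) (hq.1 _ (List.take_prefix _ _))

lemma replicate_append_replicate_mem_dyckLang (m : ℕ) :
    List.replicate m 0 ++ List.replicate m 1 ∈ dyckLang := by
  refine ⟨fun s hs => ?_, by simp [List.count_replicate]⟩
  rw [List.prefix_iff_eq_take.1 hs]
  simp [List.take_append, List.take_replicate, List.count_replicate]

lemma count_zero_le_count_one_of_suffix_of_mem_dyckLang (hp : p ∈ dyckLang) (hq : q <:+ p) :
    q.count 0 ≤ q.count 1 := by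
  obtain ⟨s, rfl⟩ := hq
  have hprefix := hp.1 s (List.prefix_append s q)
  have htotal := hp.2
  simp only [List.count_append] at htotal
  omega

lemma le_length_of_append_replicate_one_append_mem_dyckLang
    (h : u ++ List.replicate m 1 ++ v ∈ dyckLang) : m ≤ u.length :=
  calc
    m ≤ (u ++ List.replicate m 1).count 1 := by simp
    _ ≤ (u ++ List.replicate m 1).count 0 := h.1 _ (List.prefix_append _ _)
    _ = u.count 0 := by simp [List.count_replicate]
    _ ≤ u.length := List.count_le_length

lemma le_length_of_append_replicate_zero_append_mem_dyckLang
    (h : u ++ List.replicate m 0 ++ v ∈ dyckLang) : m ≤ v.length :=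
  calc
    m ≤ (List.replicate m 0 ++ v).count 0 := by simp
    _ ≤ (List.replicate m 0 ++ v).count 1 :=
      count_zero_le_count_one_of_suffix_of_mem_dyckLang h ⟨u, by simp⟩
    _ = v.count 1 := by simp [List.count_replicate]
    _ ≤ v.length := List.count_le_length

end Dyck

theorem dyck_not_rated_linear_general : ¬ IsLinearLang dyckLang := by
  intro hL
  obtain ⟨n, hn⟩ := hL.exists_shrink
  let m := n + 1
  let opens : List (Fin 2) := List.replicate m 0
  let closes : List (Fin 2) := List.replicate m 1
  have hmem : opens ++ (closes ++ opens) ++ closes ∈ dyckLang := by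
    simpa using append_mem_dyckLang (replicate_append_replicate_mem_dyckLang m)
      (replicate_append_replicate_mem_dyckLang m)
  obtain ⟨x, z, y, x', y', hp, hle, hlt, hmem'⟩ := hn _ hmem
    (by simp only [opens, m, List.length_append, List.length_replicate]; omega)
  obtain ⟨a, b, hopens, hcloses, rfl⟩ := exists_eq_append_of_append_eq_append hp
    (by simp only [opens, m, List.length_replicate]; omega)
    (by simp only [closes, m, List.length_replicate]; omega)
  have hleft : m ≤ (x' ++ a).length :=
    le_length_of_append_replicate_one_append_mem_dyckLang (v := opens ++ b ++ y')
      (by simpa [closes] using hmem')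
  have hright : m ≤ (b ++ y').length :=
    le_length_of_append_replicate_zero_append_mem_dyckLang (u := x' ++ a ++ closes)
      (by simpa [opens] using hmem')
  have hxa : m = x.length + a.length := by simpa [opens] using congrArg List.length hopens
  have hby : m = b.length + y.length := by simpa [closes] using congrArg List.length hcloses
  simp only [List.length_append] at hleft hright
  omega

/-- The Dyck language is not `k`-rated linear for any nonnegative rational
`k = g/h`; in particular it is not fix-rated linear (Example 8). -/
theorem dyck_not_rated_linear :
    (∀ g h : ℕ, Nat.Coprime g h → h ≠ 0 → ¬ IsRatedLinearLang g h dyckLang) ∧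
    ¬ (∃ g h : ℕ, Nat.Coprime g h ∧ h ≠ 0 ∧ IsRatedLinearLang g h dyckLang) := by
  exact ⟨fun _ _ _ _ hL => dyck_not_rated_linear_general hL.isLinearLang,
    fun ⟨_, _, _, _, hL⟩ => dyck_not_rated_linear_general hL.isLinearLang⟩
end
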